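/- arXiv:0707.1400 — 5 statements merged into one kernel-verified Lean document; each statement's English description precedes it below -/
import Mathlib

section
/- Let B be the open unit ball of ℝ³ and let s ∈ (1/2, 1]. For all positive real numbers a, b, A and every compact set K ⊂ B, there exists a constant c = c(a, b, A, s, K) > 0 such that for every function V : B → ℝ with a ≤ V(x) ≤ b for all x ∈ B and |V(x) − V(y)| ≤ A|x − y|^s for all x, y ∈ B, and every positive u ∈ C²(B) satisfying −∑ᵢ ∂²u/∂xᵢ² = V u⁵ in B, one has (sup_K u)^{2s−1} · (inf_B u) ≤ c. -/
open MeasureTheory Metric Real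

/-- The Euclidean Laplacian `∑ i, ∂²u/∂xᵢ²` (without sign). -/
noncomputable def lapl {n : ℕ} (u : EuclideanSpace ℝ (Fin n) → ℝ)
    (x : EuclideanSpace ℝ (Fin n)) : ℝ :=
  ∑ i : Fin n,
    fderiv ℝ (fun y => fderiv ℝ u y (EuclideanSpace.single i 1)) x (EuclideanSpace.single i 1)

open Filter Topology

/-- Three dimensional Euclidean space. -/
abbrev E3 := EuclideanSpace ℝ (Fin 3)

/-- Standard basis vectors. -/
noncomputable abbrev ee (i : Fin 3) : E3 := EuclideanSpace.single i (1 : ℝ)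

/-- `f` has line second derivatives at `x` along the axes, with sum `l`. -/
def HL (f : E3 → ℝ) (x : E3) (l : ℝ) : Prop :=
  ∃ (F : Fin 3 → ℝ → ℝ) (c : Fin 3 → ℝ),
    (∀ i, ∀ᶠ t in 𝓝 (0 : ℝ), HasDerivAt (fun t : ℝ => f (x + t • ee i)) (F i t) t) ∧
    (∀ i, HasDerivAt (F i) (c i) 0) ∧ ∑ i, c i = l

lemma HL.add {f g : E3 → ℝ} {x : E3} {l k : ℝ} (hf : HL f x l) (hg : HL g x k) :
    HL (fun y => f y + g y) x (l + k) := by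
  obtain ⟨F, c, h1, h2, h3⟩ := hf
  obtain ⟨G, d, g1, g2, g3⟩ := hg
  refine ⟨fun i t => F i t + G i t, fun i => c i + d i, fun i => ?_, fun i => (h2 i).add (g2 i), ?_⟩
  · filter_upwards [h1 i, g1 i] with t ht gt
    exact ht.add gt
  · rw [Finset.sum_add_distrib, h3, g3]

lemma HL.const_mul {f : E3 → ℝ} {x : E3} {l : ℝ} (a : ℝ) (hf : HL f x l) :
    HL (fun y => a * f y) x (a * l) := by
  obtain ⟨F, c, h1, h2, h3⟩ := hf
  refine ⟨fun i t => a * F i t, fun i => a * c i, fun i => ?_, fun i => (h2 i).const_mul a, ?_⟩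
  · filter_upwards [h1 i] with t ht
    exact ht.const_mul a
  · rw [← Finset.mul_sum, h3]

lemma HL.const (a : ℝ) (x : E3) : HL (fun _ => a) x 0 :=
  ⟨fun _ _ => 0, fun _ => 0, fun _ => Eventually.of_forall fun t => hasDerivAt_const t a,
    fun _ => hasDerivAt_const _ _, by simp⟩

lemma line_tendsto (x : E3) (i : Fin 3) :
    Tendsto (fun t : ℝ => x + t • ee i) (𝓝 0) (𝓝 x) := by
  have : Continuous (fun t : ℝ => x + t • ee i) := by fun_prop
  simpa using this.tendsto 0

lemma line_hasDerivAt (x : E3) (i : Fin 3) (t : ℝ) :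
    HasDerivAt (fun t : ℝ => x + t • ee i) (ee i) t := by
  simpa using ((hasDerivAt_id t).smul_const (ee i)).const_add x

lemma second_deriv_nonneg {g G : ℝ → ℝ} {c : ℝ}
    (h1 : ∀ᶠ t in 𝓝 (0 : ℝ), HasDerivAt g (G t) t) (h2 : HasDerivAt G c 0)
    (hmin : IsLocalMin g 0) : 0 ≤ c := by
  by_contra hc
  push Not at hc
  have hd : deriv g =ᶠ[𝓝 0] G := h1.mono fun t ht => ht.deriv
  have hdd : deriv (deriv g) 0 = c := by rw [hd.deriv_eq, h2.deriv]
  have h0 : HasDerivAt g (G 0) 0 := h1.self_of_nhds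
  have hmax : IsLocalMax g 0 :=
    isLocalMax_of_deriv_deriv_neg (by rw [hdd]; exact hc) hmin.deriv_eq_zero h0.continuousAt
  have hcst : g =ᶠ[𝓝 0] fun _ => g 0 := by
    filter_upwards [hmin, hmax] with t h h'
    exact le_antisymm h' h
  have e1 : deriv g =ᶠ[𝓝 0] fun _ => 0 := by
    have := hcst.deriv
    simpa using this
  have e2 : deriv (deriv g) 0 = 0 := by rw [e1.deriv_eq]; simp
  linarith

lemma HL.nonneg_of_min {f : E3 → ℝ} {x : E3} {l : ℝ} (hf : HL f x l) (hm : IsLocalMin f x) :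
    0 ≤ l := by
  obtain ⟨F, c, h1, h2, h3⟩ := hf
  rw [← h3]
  refine Finset.sum_nonneg fun i _ => second_deriv_nonneg (h1 i) (h2 i) ?_
  have := (line_tendsto x i).eventually hm
  filter_upwards [this] with t ht
  simpa using ht

lemma norm_line (x : E3) (i : Fin 3) (t : ℝ) : ‖x + t • ee i‖ ^ 2 = ‖x‖ ^ 2 + 2 * t * x i + t ^ 2 := by
  rw [norm_add_sq_real, inner_smul_right, norm_smul]
  simp [EuclideanSpace.inner_single_right]
  ring

lemma norm_sq3 (x : E3) : ‖x‖ ^ 2 = x 0 ^ 2 + x 1 ^ 2 + x 2 ^ 2 := by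
  rw [EuclideanSpace.real_norm_sq_eq, Fin.sum_univ_three]

lemma N_hasDerivAt (x : E3) (i : Fin 3) (t : ℝ) :
    HasDerivAt (fun t : ℝ => ‖x + t • ee i‖ ^ 2) (2 * (x i + t)) t := by
  have : (fun t : ℝ => ‖x + t • ee i‖ ^ 2) = fun t => ‖x‖ ^ 2 + 2 * t * x i + t ^ 2 := by
    funext t; exact norm_line x i t
  rw [this]
  have h1 := (((hasDerivAt_id t).const_mul 2).mul_const (x i)).const_add (‖x‖ ^ 2)
  have h2 := h1.add ((hasDerivAt_id t).pow 2)
  refine h2.congr_deriv ?_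
  simp
  ring

lemma line_ne {x : E3} (hx : x ≠ 0) (i : Fin 3) :
    ∀ᶠ t in 𝓝 (0 : ℝ), ‖x + t • ee i‖ ^ 2 ≠ 0 := by
  filter_upwards [(line_tendsto x i).eventually (isOpen_ne.mem_nhds hx)] with t ht
  have : x + t • ee i ≠ 0 := ht
  positivity

lemma npow_line {x : E3} {i : Fin 3} (q : ℝ) {t : ℝ} (h : ‖x + t • ee i‖ ^ 2 ≠ 0) :
    HasDerivAt (fun t : ℝ => (‖x + t • ee i‖ ^ 2) ^ q)
      (2 * (x i + t) * q * (‖x + t • ee i‖ ^ 2) ^ (q - 1)) t :=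
  (N_hasDerivAt x i t).rpow_const (Or.inl h)

lemma npow_line2 {x : E3} {i : Fin 3} (q : ℝ) (hx : x ≠ 0) :
    HasDerivAt (fun t : ℝ => 2 * (x i + t) * q * (‖x + t • ee i‖ ^ 2) ^ (q - 1))
      (2 * q * (‖x‖ ^ 2) ^ (q - 1) + 4 * (x i) ^ 2 * q * (q - 1) * (‖x‖ ^ 2) ^ (q - 2)) 0 := by
  have h1 : HasDerivAt (fun t : ℝ => 2 * (x i + t) * q) (2 * q) 0 := by
    simpa using (((hasDerivAt_id (0 : ℝ)).const_add (x i)).const_mul 2).mul_const q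
  have h2 := npow_line (x := x) (i := i) (q - 1) (t := 0) (by simpa using hx)
  refine (h1.mul h2).congr_deriv ?_
  simp only [zero_smul, add_zero]
  rw [show q - 1 - 1 = q - 2 by ring]
  ring

lemma HL_npow {x : E3} (hx : x ≠ 0) (q : ℝ) :
    HL (fun y => (‖y‖ ^ 2) ^ q) x (q * (4 * q + 2) * (‖x‖ ^ 2) ^ (q - 1)) := by
  refine ⟨_, _, fun i => ?_, fun i => npow_line2 (i := i) q hx, ?_⟩
  · filter_upwards [line_ne hx i] with t ht
    exact npow_line q ht
  · have hN : 0 < ‖x‖ ^ 2 := by positivity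
    have : (‖x‖ ^ 2) ^ (q - 1) = (‖x‖ ^ 2) ^ (q - 2) * ‖x‖ ^ 2 := by
      rw [← Real.rpow_add_one hN.ne']; congr 1; ring
    rw [Fin.sum_univ_three, this]
    generalize (‖x‖ ^ 2) ^ (q - 2) = z
    rw [norm_sq3]
    ring

lemma HL_normsq (p x : E3) : HL (fun y => ‖y - p‖ ^ 2) x 6 := by
  refine ⟨fun i t => 2 * ((x - p) i + t), fun i => 2, fun i => ?_, fun i => ?_, ?_⟩
  · refine Eventually.of_forall fun t => ?_
    have := N_hasDerivAt (x - p) i t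
    convert this using 4
    abel
  · simpa using (((hasDerivAt_id (0 : ℝ)).const_add ((x - p) i)).const_mul 2)
  · simp; norm_num

section C2
variable {u : E3 → ℝ} {U : Set E3}

lemma C2_d1 (hU : IsOpen U) (hu : ContDiffOn ℝ 2 u U) {x : E3} (hx : x ∈ U) :
    HasFDerivAt u (fderiv ℝ u x) x :=
  ((hu.contDiffAt (hU.mem_nhds hx)).differentiableAt (by norm_num)).hasFDerivAt

lemma C2_d2 (hU : IsOpen U) (hu : ContDiffOn ℝ 2 u U) {x : E3} (hx : x ∈ U) :
    HasFDerivAt (fderiv ℝ u) (fderiv ℝ (fderiv ℝ u) x) x := by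
  have h : ContDiffAt ℝ 1 (fderiv ℝ u) x :=
    (hu.contDiffAt (hU.mem_nhds hx)).fderiv_right (by norm_num)
  exact (h.differentiableAt (by norm_num)).hasFDerivAt

lemma lapl_eq (hU : IsOpen U) (hu : ContDiffOn ℝ 2 u U) {x : E3} (hx : x ∈ U) :
    lapl u x = ∑ i : Fin 3, fderiv ℝ (fderiv ℝ u) x (ee i) (ee i) := by
  unfold lapl
  refine Finset.sum_congr rfl fun i _ => ?_
  have h := (C2_d2 hU hu hx).clm_apply (hasFDerivAt_const (ee i) x)
  rw [h.fderiv]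
  simp

lemma HL_C2 (hU : IsOpen U) (hu : ContDiffOn ℝ 2 u U) {x : E3} (hx : x ∈ U) :
    HL u x (lapl u x) := by
  refine ⟨fun i t => fderiv ℝ u (x + t • ee i) (ee i),
    fun i => fderiv ℝ (fderiv ℝ u) x (ee i) (ee i), fun i => ?_, fun i => ?_,
    (lapl_eq hU hu hx).symm⟩
  · filter_upwards [(line_tendsto x i).eventually (hU.mem_nhds hx)] with t ht
    exact (C2_d1 hU hu ht).comp_hasDerivAt t (line_hasDerivAt x i t)
  · have h0 : HasFDerivAt (fderiv ℝ u) (fderiv ℝ (fderiv ℝ u) x) (x + (0 : ℝ) • ee i) := by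
      simpa only [zero_smul, add_zero] using C2_d2 hU hu hx
    have h1 : HasDerivAt (fun t : ℝ => fderiv ℝ u (x + t • ee i))
        (fderiv ℝ (fderiv ℝ u) x (ee i)) 0 :=
      h0.comp_hasDerivAt (0 : ℝ) (line_hasDerivAt x i 0)
    have h := h1.clm_apply (hasDerivAt_const (0 : ℝ) (ee i))
    refine h.congr_deriv ?_
    rw [map_zero, add_zero]

lemma E3_decomp (x : E3) : x = x 0 • ee 0 + x 1 • ee 1 + x 2 • ee 2 := by
  ext i; fin_cases i <;> simp

lemma HL_kelvin (hU : IsOpen U) (hu : ContDiffOn ℝ 2 u U) {x : E3} (hx0 : x ≠ 0) (l : ℝ)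
    (hx : (l ^ 2 / ‖x‖ ^ 2) • x ∈ U) :
    HL (fun y => l / ‖y‖ * u ((l ^ 2 / ‖y‖ ^ 2) • y)) x
      ((l / ‖x‖) ^ 5 * lapl u ((l ^ 2 / ‖x‖ ^ 2) • x)) := by
  have key : (fun y : E3 => l / ‖y‖ * u ((l ^ 2 / ‖y‖ ^ 2) • y)) =
      fun y => (l * (‖y‖ ^ 2) ^ (-1/2 : ℝ)) * u ((l ^ 2 * (‖y‖ ^ 2) ^ (-1 : ℝ)) • y) := by
    funext y
    have h1 : (‖y‖ ^ 2) ^ (-1/2 : ℝ) = ‖y‖⁻¹ := by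
      rw [← Real.rpow_natCast, ← Real.rpow_mul (norm_nonneg _)]
      norm_num [Real.rpow_neg_one]
    rw [h1, Real.rpow_neg_one]
    rfl
  rw [key]
  have hr : 0 < ‖x‖ := by positivity
  -- the curve
  set γ : Fin 3 → ℝ → E3 := fun i t => (l ^ 2 * (‖x + t • ee i‖ ^ 2) ^ (-1 : ℝ)) • (x + t • ee i) with hγ
  set γ' : Fin 3 → ℝ → E3 := fun i t => (l ^ 2 * (‖x + t • ee i‖ ^ 2) ^ (-1 : ℝ)) • ee i +
    (l ^ 2 * (2 * (x i + t) * (-1) * (‖x + t • ee i‖ ^ 2) ^ ((-1 : ℝ) - 1))) • (x + t • ee i) with hγ'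
  have hz0 : ∀ i, γ i 0 = (l ^ 2 / ‖x‖ ^ 2) • x := by
    intro i; simp [hγ, Real.rpow_neg_one, div_eq_mul_inv]
  set z := (l ^ 2 / ‖x‖ ^ 2) • x with hz
  have hγd : ∀ i t, ‖x + t • ee i‖ ^ 2 ≠ 0 → HasDerivAt (γ i) (γ' i t) t := by
    intro i t ht
    exact ((npow_line (-1) ht).const_mul (l ^ 2)).smul (line_hasDerivAt x i t)
  have hγc : ∀ i, ContinuousAt (γ i) 0 := fun i =>
    (hγd i 0 (by simpa using hx0)).continuousAt
  have hγU : ∀ i, ∀ᶠ t in 𝓝 (0 : ℝ), γ i t ∈ U := by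
    intro i
    exact (hγc i).eventually (by rw [hz0]; exact hU.mem_nhds hx)
  refine ⟨fun i t => (l * (2 * (x i + t) * (-1/2) * (‖x + t • ee i‖ ^ 2) ^ ((-1/2 : ℝ) - 1))) * u (γ i t)
      + (l * (‖x + t • ee i‖ ^ 2) ^ (-1/2 : ℝ)) * fderiv ℝ u (γ i t) (γ' i t), ?_⟩
  have hg2 := fun i => (npow_line2 (x := x) (i := i) (-1/2) hx0).const_mul l
  have hg1 := fun i => (npow_line (x := x) (i := i) (-1/2) (t := 0) (by simpa using hx0)).const_mul l
  have hc2 := fun i => (npow_line2 (x := x) (i := i) (-1) hx0).const_mul (l ^ 2)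
  have hc1 := fun i => (npow_line (x := x) (i := i) (-1) (t := 0) (by simpa using hx0)).const_mul (l ^ 2)
  have hγ2 : ∀ i, HasDerivAt (γ' i) _ 0 := fun i =>
    ((hc1 i).smul_const (ee i)).add ((hc2 i).smul (line_hasDerivAt x i 0))
  have hu1 : ∀ i, HasDerivAt (fun t => u (γ i t)) (fderiv ℝ u (γ i 0) (γ' i 0)) 0 := fun i => by
    have := C2_d1 hU hu (x := γ i 0) (by rw [hz0]; exact hx)
    exact this.comp_hasDerivAt 0 (hγd i 0 (by simpa using hx0))
  have hu2 : ∀ i, HasDerivAt (fun t => fderiv ℝ u (γ i t) (γ' i t)) _ 0 := fun i => by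
    have := C2_d2 hU hu (x := γ i 0) (by rw [hz0]; exact hx)
    exact (this.comp_hasDerivAt 0 (hγd i 0 (by simpa using hx0))).clm_apply (hγ2 i)
  refine ⟨_, fun i => ?_, fun i => ((hg2 i).mul (hu1 i)).add ((hg1 i).mul (hu2 i)), ?_⟩
  · filter_upwards [line_ne hx0 i, hγU i] with t ht htU
    have h1 := (npow_line (x := x) (i := i) (-1/2) ht).const_mul l
    have h2 := (C2_d1 hU hu htU).comp_hasDerivAt t (hγd i t ht)
    exact h1.mul h2
  · rw [lapl_eq hU hu hx]
    have e1 : ∀ k : ℝ, (‖x‖ ^ 2) ^ k = ‖x‖ ^ (2 * k) := by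
      intro k
      rw [← Real.rpow_natCast, ← Real.rpow_mul (norm_nonneg _)]; norm_num
    have p1 : ‖x‖ ^ (-1 : ℝ) = 1 / ‖x‖ := by rw [Real.rpow_neg_one]; simp
    have p2 : ‖x‖ ^ (-2 : ℝ) = 1 / ‖x‖ ^ 2 := by
      rw [Real.rpow_neg hr.le]; norm_num
    have p3 : ‖x‖ ^ (-3 : ℝ) = 1 / ‖x‖ ^ 3 := by
      rw [Real.rpow_neg hr.le]; norm_num
    have p4 : ‖x‖ ^ (-4 : ℝ) = 1 / ‖x‖ ^ 4 := by
      rw [Real.rpow_neg hr.le]; norm_num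
    have p5 : ‖x‖ ^ (-5 : ℝ) = 1 / ‖x‖ ^ 5 := by
      rw [Real.rpow_neg hr.le]; norm_num
    have p6 : ‖x‖ ^ (-6 : ℝ) = 1 / ‖x‖ ^ 6 := by
      rw [Real.rpow_neg hr.le]; norm_num
    simp only [Function.comp_apply, hz0]
    simp only [hγ', zero_smul, add_zero, e1]
    norm_num only [p1, p2, p3, p4, p5, p6]
    generalize hB : fderiv ℝ (fderiv ℝ u) z = B
    generalize hL : fderiv ℝ u z = ℓ
    generalize u z = u0
    simp only [map_add, map_smul, _root_.add_apply, _root_.smul_apply,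
      smul_eq_mul]
    have hℓ : ℓ x = x 0 * ℓ (ee 0) + x 1 * ℓ (ee 1) + x 2 * ℓ (ee 2) := by
      conv_lhs => rw [E3_decomp x]
      simp only [map_add, map_smul, smul_eq_mul]
    have hB1 : ∀ w, B x w = x 0 * B (ee 0) w + x 1 * B (ee 1) w + x 2 * B (ee 2) w := by
      intro w
      conv_lhs => rw [E3_decomp x]
      simp only [map_add, map_smul, smul_eq_mul, _root_.add_apply,
        _root_.smul_apply]
    have hB2 : ∀ w, B w x = x 0 * B w (ee 0) + x 1 * B w (ee 1) + x 2 * B w (ee 2) := by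
      intro w
      conv_lhs => rw [E3_decomp x]
      simp only [map_add, map_smul, smul_eq_mul]
    rw [Fin.sum_univ_three, Fin.sum_univ_three]
    simp only [hB1, hB2, hℓ]
    have hN := norm_sq3 x
    generalize ‖x‖ = r at *
    field_simp
    rw [show r ^ 4 = (r ^ 2) ^ 2 by ring, hN]
    ring
end C2

/-- The comparison function of the method of moving spheres. -/
noncomputable def QQ (u : E3 → ℝ) (H l : ℝ) (y : E3) : ℝ :=
  u y - l / ‖y‖ * u ((l ^ 2 / ‖y‖ ^ 2) • y) - H * (1 - √(l / ‖y‖))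

/-- Standing assumptions for the moving spheres argument centered at the origin. -/
structure MS (s A C0 L R R0 H m : ℝ) (u V : E3 → ℝ) : Prop where
  s0 : 0 ≤ s
  s1 : s ≤ 1
  A0 : 0 < A
  L0 : 0 < L
  LR : L < R
  RR0 : R < R0
  V0 : ∀ x ∈ ball (0 : E3) R0, 0 ≤ V x
  VH : ∀ x ∈ ball (0 : E3) R0, ∀ y ∈ ball (0 : E3) R0, |V x - V y| ≤ A * ‖x - y‖ ^ s
  u2 : ContDiffOn ℝ 2 u (ball (0 : E3) R0)
  um : ∀ x ∈ ball (0 : E3) R0, m ≤ u x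
  uC : ∀ x ∈ closedBall (0 : E3) L, u x ≤ C0
  eq : ∀ x ∈ ball (0 : E3) R0, -lapl u x = V x * u x ^ 5
  C00 : 0 < C0
  HH : 4 * A * C0 ^ 5 * L ^ (2 + s) < H
  mH : H + C0 * L / R < m

lemma kel_norm {l : ℝ} {y : E3} (hy : 0 < ‖y‖) : ‖(l ^ 2 / ‖y‖ ^ 2) • y‖ = l ^ 2 / ‖y‖ := by
  rw [norm_smul, Real.norm_of_nonneg (by positivity)]
  field_simp

lemma kel_le {l : ℝ} {y : E3} (hl : 0 < l) (hy : l ≤ ‖y‖) : l ^ 2 / ‖y‖ ≤ l := by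
  have : 0 < ‖y‖ := hl.trans_le hy
  rw [div_le_iff₀ this]; nlinarith

lemma kel_sub {l : ℝ} {y : E3} (hl : 0 < l) (hy : l ≤ ‖y‖) :
    ‖y - (l ^ 2 / ‖y‖ ^ 2) • y‖ = ‖y‖ - l ^ 2 / ‖y‖ := by
  have h : 0 < ‖y‖ := hl.trans_le hy
  have : y - (l ^ 2 / ‖y‖ ^ 2) • y = (1 - l ^ 2 / ‖y‖ ^ 2) • y := by rw [sub_smul, one_smul]
  rw [this, norm_smul, Real.norm_of_nonneg]
  · field_simp
  · rw [sub_nonneg, div_le_one (by positivity)]; nlinarith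

lemma rpow_key {l r L s : ℝ} (hl : 0 < l) (hr : l ≤ r) (hL : l ≤ L) (hs0 : 0 ≤ s) (hs : s ≤ 1) :
    r ^ s * (l / r) ^ 5 ≤ L ^ (2 + s) * (√l * (r ^ 2) ^ (-1/4 - 1 : ℝ)) := by
  have hr0 : 0 < r := hl.trans_le hr
  have e1 : (r ^ 2) ^ (-1/4 - 1 : ℝ) = r ^ (-5/2 : ℝ) := by
    rw [← Real.rpow_natCast, ← Real.rpow_mul hr0.le]; norm_num
  have e2 : (l / r) ^ 5 = l ^ (1/2 : ℝ) * l ^ (9/2 : ℝ) * r ^ (-5 : ℝ) := by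
    rw [← Real.rpow_add hl, Real.rpow_neg hr0.le]
    norm_num
    rw [div_pow]; rfl
  rw [e1, e2, Real.sqrt_eq_rpow]
  have e3 : r ^ s * (l ^ (1/2 : ℝ) * l ^ (9/2 : ℝ) * r ^ (-5 : ℝ)) =
      (l ^ (9/2 : ℝ) * r ^ (s - 5/2)) * (l ^ (1/2 : ℝ) * r ^ (-5/2 : ℝ)) := by
    have : r ^ s * r ^ (-5 : ℝ) = r ^ (s - 5/2) * r ^ (-5/2 : ℝ) := by
      rw [← Real.rpow_add hr0, ← Real.rpow_add hr0]; congr 1; ring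
    linear_combination (l ^ (1/2 : ℝ) * l ^ (9/2 : ℝ)) * this
  rw [e3]
  refine mul_le_mul_of_nonneg_right ?_ (by positivity)
  calc l ^ (9/2 : ℝ) * r ^ (s - 5/2) ≤ l ^ (9/2 : ℝ) * l ^ (s - 5/2) := by
        refine mul_le_mul_of_nonneg_left ?_ (by positivity)
        exact Real.rpow_le_rpow_of_nonpos hl hr (by linarith)
    _ = l ^ (2 + s) := by rw [← Real.rpow_add hl]; congr 1; ring
    _ ≤ L ^ (2 + s) := Real.rpow_le_rpow hl.le hL (by linarith)

section
variable {s A C0 L R R0 H m : ℝ} {u V : E3 → ℝ}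

lemma QQ_cont (hu : ContinuousOn u (ball (0 : E3) R0)) {l : ℝ} {y : E3} (hy : y ≠ 0)
    (h1 : y ∈ ball (0 : E3) R0) (h2 : (l ^ 2 / ‖y‖ ^ 2) • y ∈ ball (0 : E3) R0) :
    ContinuousAt (fun p : ℝ × E3 => QQ u H p.1 p.2) (l, y) := by
  unfold QQ
  have hn : ‖y‖ ≠ 0 := by simpa using hy
  have c1 : ContinuousAt u y := hu.continuousAt (isOpen_ball.mem_nhds h1)
  have c2 : ContinuousAt u ((l ^ 2 / ‖y‖ ^ 2) • y) := hu.continuousAt (isOpen_ball.mem_nhds h2)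
  have d1 : ContinuousAt (fun p : ℝ × E3 => p.1 / ‖p.2‖) (l, y) :=
    continuousAt_fst.div continuousAt_snd.norm hn
  have d2 : ContinuousAt (fun p : ℝ × E3 => (p.1 ^ 2 / ‖p.2‖ ^ 2) • p.2) (l, y) :=
    ((continuousAt_fst.pow 2).div (continuousAt_snd.norm.pow 2) (pow_ne_zero 2 hn)).smul
      continuousAt_snd
  have f1 : ContinuousAt (fun p : ℝ × E3 => u p.2) (l, y) :=
    ContinuousAt.comp (g := u) (f := fun p : ℝ × E3 => p.2) (x := (l, y)) c1 continuousAt_snd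
  have f2 : ContinuousAt (fun p : ℝ × E3 => u ((p.1 ^ 2 / ‖p.2‖ ^ 2) • p.2)) (l, y) :=
    ContinuousAt.comp (g := u) (f := fun p : ℝ × E3 => (p.1 ^ 2 / ‖p.2‖ ^ 2) • p.2) (x := (l, y)) c2 d2
  exact (f1.sub (d1.mul f2)).sub (continuousAt_const.mul (continuousAt_const.sub d1.sqrt))

lemma MS.mem1 (h : MS s A C0 L R R0 H m u V) {y : E3} (hy : ‖y‖ ≤ R) : y ∈ ball (0 : E3) R0 := by
  rw [mem_ball_zero_iff]; exact hy.trans_lt h.RR0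

lemma MS.mem3 (h : MS s A C0 L R R0 H m u V) {l : ℝ} {y : E3} (hl : 0 < l) (hL : l ≤ L)
    (hy : l ≤ ‖y‖) : (l ^ 2 / ‖y‖ ^ 2) • y ∈ closedBall (0 : E3) L := by
  rw [mem_closedBall_zero_iff, kel_norm (hl.trans_le hy)]
  exact (kel_le hl hy).trans hL

lemma MS.mem2 (h : MS s A C0 L R R0 H m u V) {l : ℝ} {y : E3} (hl : 0 < l) (hL : l ≤ L)
    (hy : l ≤ ‖y‖) : (l ^ 2 / ‖y‖ ^ 2) • y ∈ ball (0 : E3) R0 := by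
  have := h.mem3 hl hL hy
  apply h.mem1
  rw [mem_closedBall_zero_iff] at this
  linarith [h.LR]

lemma MS.H0 (h : MS s A C0 L R R0 H m u V) : 0 < H := by
  refine lt_of_le_of_lt ?_ h.HH
  have := h.A0; have := h.C00; have := h.L0
  positivity

lemma MS.improve (h : MS s A C0 L R R0 H m u V) {l : ℝ} (hl : 0 < l) (hL : l ≤ L)
    (hQ : ∀ y : E3, l ≤ ‖y‖ → ‖y‖ ≤ R → 0 ≤ QQ u H l y) :
    ∀ y : E3, l ≤ ‖y‖ → ‖y‖ ≤ R → (m - C0 * L / R - H) * (1 - l / ‖y‖) ≤ QQ u H l y := by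
  set q := m - C0 * L / R - H with hq
  have hq0 : 0 < q := by have := h.mH; simp only [hq]; linarith
  have hR : 0 < R := h.L0.trans h.LR
  have hH0 := h.H0
  have hC0 := h.C00
  have hA0 := h.A0
  set P : E3 → ℝ := fun y => QQ u H l y - q * (1 - l / ‖y‖) with hP
  set S : Set E3 := {y | l ≤ ‖y‖ ∧ ‖y‖ ≤ R} with hS
  have hSc : IsCompact S := by
    refine (isCompact_closedBall (0 : E3) R).of_isClosed_subset ?_ ?_
    · exact (isClosed_le continuous_const continuous_norm).inter
        (isClosed_le continuous_norm continuous_const)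
    · intro y hy; simpa using hy.2
  intro y0 hy0 hy0R
  have hne : S.Nonempty := ⟨y0, hy0, hy0R⟩
  have hcont : ContinuousOn P S := by
    intro y hy
    have hpos : 0 < ‖y‖ := hl.trans_le hy.1
    have hy0 : y ≠ 0 := norm_pos_iff.mp hpos
    have c1 := QQ_cont (H := H) h.u2.continuousOn hy0 (h.mem1 hy.2) (h.mem2 hl hL hy.1)
    have c2 : ContinuousAt (fun z : E3 => QQ u H l z) y :=
      ContinuousAt.comp (g := fun p : ℝ × E3 => QQ u H p.1 p.2) (f := fun z : E3 => (l, z)) (x := y)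
        c1 (by fun_prop)
    have c3 : ContinuousAt (fun z : E3 => q * (1 - l / ‖z‖)) y :=
      continuousAt_const.mul (continuousAt_const.sub
        (continuousAt_const.div continuousAt_id.norm hpos.ne'))
    exact (c2.sub c3).continuousWithinAt
  obtain ⟨y, hyS, hmin⟩ := hSc.exists_isMinOn hne hcont
  have hmin0 : P y ≤ P y0 := hmin ⟨hy0, hy0R⟩
  suffices hh : 0 ≤ P y by
    have : 0 ≤ P y0 := hh.trans hmin0
    simp only [hP] at this
    linarith
  have hr : 0 < ‖y‖ := hl.trans_le hyS.1
  have hyne : y ≠ 0 := norm_pos_iff.mp hr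
  rcases eq_or_lt_of_le hyS.1 with h1 | h1
  · -- inner boundary
    have e : l / ‖y‖ = 1 := by rw [← h1]; field_simp
    have e2 : l ^ 2 / ‖y‖ ^ 2 = 1 := by rw [← h1]; field_simp
    simp only [hP, QQ, e, e2]
    simp
  rcases eq_or_lt_of_le hyS.2 with h2 | h2
  · -- outer boundary
    have hu1 := h.um y (h.mem1 hyS.2)
    have hu2 := h.uC _ (h.mem3 hl hL hyS.1)
    have hu0 := h.um _ (h.mem2 hl hL hyS.1)
    have k1 : l / ‖y‖ * u ((l ^ 2 / ‖y‖ ^ 2) • y) ≤ C0 * L / R := by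
      rw [← h2]
      calc l / ‖y‖ * u ((l ^ 2 / ‖y‖ ^ 2) • y) ≤ L / ‖y‖ * C0 := by
            apply mul_le_mul _ hu2 _ (by have := h.L0; positivity)
            · gcongr
            · refine le_trans ?_ hu0
              have := h.mH
              have : 0 < C0 * L / R := by have := h.L0; positivity
              linarith
        _ = C0 * L / ‖y‖ := by ring
    have k2 : 0 ≤ √(l / ‖y‖) := Real.sqrt_nonneg _
    have k3 : 0 ≤ l / ‖y‖ := by positivity
    simp only [hP, QQ]
    nlinarith [mul_nonneg hH0.le k2, mul_nonneg hq0.le k3]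
  · -- interior
    exfalso
    have hloc : IsLocalMin P y := by
      have : S ∈ 𝓝 y := by
        have o : IsOpen {y : E3 | l < ‖y‖ ∧ ‖y‖ < R} :=
          (isOpen_lt continuous_const continuous_norm).inter
            (isOpen_lt continuous_norm continuous_const)
        filter_upwards [o.mem_nhds ⟨h1, h2⟩] with z hz
        exact ⟨hz.1.le, hz.2.le⟩
      exact hmin.isLocalMin this
    have hHL := (((HL_C2 isOpen_ball h.u2 (h.mem1 hyS.2)).add
      ((HL_kelvin isOpen_ball h.u2 hyne l (h.mem2 hl hL hyS.1)).const_mul (-1))).add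
      (((HL_npow hyne (-1/4)).const_mul (H * √l)).add
      ((HL_npow hyne (-1/2)).const_mul (q * l)))).add (HL.const (-H - q) y)
    have hfun : P = fun y => ((u y + -1 * (l / ‖y‖ * u ((l ^ 2 / ‖y‖ ^ 2) • y))) +
        (H * √l * (‖y‖ ^ 2) ^ (-1/4 : ℝ) + q * l * (‖y‖ ^ 2) ^ (-1/2 : ℝ))) + (-H - q) := by
      funext y
      have e1 : (‖y‖ ^ 2) ^ (-1/2 : ℝ) = ‖y‖⁻¹ := by
        rw [← Real.rpow_natCast, ← Real.rpow_mul (norm_nonneg _)]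
        norm_num [Real.rpow_neg_one]
      have e2 : (‖y‖ ^ 2) ^ (-1/4 : ℝ) = (√‖y‖)⁻¹ := by
        rw [← Real.rpow_natCast, ← Real.rpow_mul (norm_nonneg _), Real.sqrt_eq_rpow,
          ← Real.rpow_neg (norm_nonneg _)]
        norm_num
      simp only [hP, QQ]
      rw [e1, e2, Real.sqrt_div hl.le]
      ring
    rw [← hfun] at hHL
    have hnn := hHL.nonneg_of_min hloc
    have q1 := h.eq y (h.mem1 hyS.2)
    have q2 := h.eq _ (h.mem2 hl hL hyS.1)
    have hQy := hQ y hyS.1 hyS.2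
    set z := (l ^ 2 / ‖y‖ ^ 2) • y with hz
    set k := l / ‖y‖ * u z with hk
    have hzm := h.um z (h.mem2 hl hL hyS.1)
    have hm0 : 0 < m := by
      have := h.mH
      have : 0 < C0 * L / R := by have := h.L0; positivity
      linarith
    have hk0 : 0 ≤ k := by have : 0 < u z := by linarith
                           positivity
    have hky : k ≤ u y := by
      have : 0 ≤ H * (1 - √(l / ‖y‖)) := by
        apply mul_nonneg hH0.le
        rw [sub_nonneg, Real.sqrt_le_one]
        rw [div_le_one hr]; exact h1.le
      simp only [QQ] at hQy
      linarith
    have hk5 : k ^ 5 ≤ u y ^ 5 := pow_le_pow_left₀ hk0 hky 5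
    have hkC : k ^ 5 ≤ (l / ‖y‖) ^ 5 * C0 ^ 5 := by
      rw [← mul_pow]
      exact pow_le_pow_left₀ hk0 (mul_le_mul_of_nonneg_left (h.uC _ (h.mem3 hl hL hyS.1))
        (by positivity)) 5
    have hV := h.V0 y (h.mem1 hyS.2)
    have hVV : V z - V y ≤ A * ‖y‖ ^ s := by
      have := h.VH y (h.mem1 hyS.2) z (h.mem2 hl hL hyS.1)
      have h3 : ‖y - z‖ ≤ ‖y‖ := by
        rw [hz, kel_sub hl hyS.1]
        have : 0 ≤ l ^ 2 / ‖y‖ := by positivity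
        linarith
      have h4 : ‖y - z‖ ^ s ≤ ‖y‖ ^ s := Real.rpow_le_rpow (norm_nonneg _) h3 h.s0
      have h5 := abs_le.mp this
      nlinarith
    have hkey := rpow_key (s := s) hl hyS.1 hL h.s0 h.s1
    set W := √l * (‖y‖ ^ 2) ^ (-1/4 - 1 : ℝ) with hW
    have hW0 : 0 < W := by positivity
    have i1 : (V z - V y) * k ^ 5 ≤ A * ‖y‖ ^ s * ((l / ‖y‖) ^ 5 * C0 ^ 5) := by
      calc (V z - V y) * k ^ 5 ≤ A * ‖y‖ ^ s * k ^ 5 :=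
            mul_le_mul_of_nonneg_right hVV (by positivity)
        _ ≤ _ := mul_le_mul_of_nonneg_left hkC (by positivity)
    have i2 : A * ‖y‖ ^ s * ((l / ‖y‖) ^ 5 * C0 ^ 5) ≤ A * C0 ^ 5 * (L ^ (2 + s) * W) := by
      have := mul_le_mul_of_nonneg_left hkey (show 0 ≤ A * C0 ^ 5 by positivity)
      linarith
    have i3 : 4 * (A * C0 ^ 5 * (L ^ (2 + s) * W)) < H * W := by
      have := mul_lt_mul_of_pos_right h.HH hW0
      linarith
    have i4 : V y * k ^ 5 ≤ V y * u y ^ 5 := mul_le_mul_of_nonneg_left hk5 hV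
    have i5 : (l / ‖y‖) ^ 5 * lapl u z = - (V z * k ^ 5) := by
      rw [hk, mul_pow, show lapl u z = -(V z * u z ^ 5) by linarith]; ring
    have i6 : H * √l * (-1/4 * (4 * (-1/4) + 2) * (‖y‖ ^ 2) ^ (-1/4 - 1 : ℝ)) = -(H * W) / 4 := by
      rw [hW]; ring
    rw [i5, i6] at hnn
    norm_num at hnn
    linarith
end


section
variable {s A C0 L R R0 H m : ℝ} {u V : E3 → ℝ}

lemma MS.m0 (h : MS s A C0 L R R0 H m u V) : H < m ∧ 0 < m := by
  have := h.mH
  have h1 := h.H0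
  have : 0 < C0 * L / R := by
    have := h.L0; have := h.C00; have := h.L0.trans h.LR; positivity
  constructor <;> linarith

lemma one_sub_sqrt_le {x : ℝ} (h0 : 0 ≤ x) (h1 : x ≤ 1) : 1 - √x ≤ 1 - x := by
  have : x ≤ √x := Real.le_sqrt_of_sq_le (by nlinarith)
  linarith

lemma MS.start (h : MS s A C0 L R R0 H m u V) : ∃ l0 > 0, ∀ l, 0 < l → l < l0 → l ≤ L →
    ∀ y : E3, l ≤ ‖y‖ → ‖y‖ ≤ R → 0 ≤ QQ u H l y := by
  obtain ⟨hHm, hm0⟩ := h.m0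
  have hH0 := h.H0
  have hC0 := h.C00
  have h00 : (0 : E3) ∈ ball (0 : E3) R0 := h.mem1 (by simpa using (h.L0.trans h.LR).le)
  have hc : ContDiffAt ℝ 1 u 0 := (h.u2.contDiffAt (isOpen_ball.mem_nhds h00)).of_le (by norm_num)
  obtain ⟨K, t, ht, hLip⟩ := hc.exists_lipschitzOnWith
  obtain ⟨ε, hε, hεt⟩ := Metric.mem_nhds_iff.mp ht
  set r0 := min ε ((m - H) / (2 * (K + 1))) with hr0
  have hK : (0 : ℝ) ≤ K := K.2
  have hr0pos : 0 < r0 := by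
    apply lt_min hε
    apply div_pos <;> linarith
  refine ⟨r0 * (m - H) / C0, by apply div_pos (mul_pos hr0pos (by linarith)) hC0, ?_⟩
  intro l hl hl0 hL y hy hyR
  have hr : 0 < ‖y‖ := hl.trans_le hy
  have hx0 : 0 < l / ‖y‖ := by positivity
  have hx1 : l / ‖y‖ ≤ 1 := by rw [div_le_one hr]; exact hy
  have hs := one_sub_sqrt_le hx0.le hx1
  have hu1 := h.um y (h.mem1 hyR)
  have hu2 := h.uC _ (h.mem3 hl hL hy)
  have hu0 := h.um _ (h.mem2 hl hL hy)
  unfold QQ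
  rcases lt_or_ge ‖y‖ r0 with hyr | hyr
  · have hyt : y ∈ t := hεt (by simpa using hyr.trans_le (min_le_left _ _))
    have hzt : (l ^ 2 / ‖y‖ ^ 2) • y ∈ t := hεt (by
      rw [mem_ball_zero_iff, kel_norm hr]
      exact ((kel_le hl hy).trans hy).trans_lt (hyr.trans_le (min_le_left _ _)))
    have hd := hLip.dist_le_mul y hyt _ hzt
    rw [dist_eq_norm, dist_eq_norm, kel_sub hl hy, Real.norm_eq_abs] at hd
    have hd1 := (abs_le.mp hd).1
    have hyr2 : ‖y‖ * (2 * (K + 1)) ≤ m - H := by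
      rw [← le_div_iff₀ (by linarith)]
      exact hyr.le.trans (min_le_right _ _)
    set x := l / ‖y‖ with hx
    have e1 : ‖y‖ - l ^ 2 / ‖y‖ = ‖y‖ * (1 - x) * (1 + x) := by
      rw [hx]; field_simp; ring
    rw [e1] at hd1
    set U := u ((l ^ 2 / ‖y‖ ^ 2) • y)
    have e2 : (K : ℝ) * (‖y‖ * (1 - x) * (1 + x)) ≤ (1 - x) * (m - H) := by
      have : (K : ℝ) * ‖y‖ * (1 + x) ≤ m - H := by nlinarith [mul_nonneg hK hr.le]
      nlinarith
    have e3 : (1 - x) * m ≤ (1 - x) * U := mul_le_mul_of_nonneg_left hu0 (by linarith)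
    have e4 := mul_le_mul_of_nonneg_left hs hH0.le
    nlinarith
  · have k1 : l / ‖y‖ * u ((l ^ 2 / ‖y‖ ^ 2) • y) ≤ m - H := by
      calc l / ‖y‖ * u ((l ^ 2 / ‖y‖ ^ 2) • y) ≤ l / r0 * C0 := by
            apply mul_le_mul _ hu2 (hm0.le.trans hu0) (by positivity)
            gcongr
        _ ≤ m - H := by
            rw [lt_div_iff₀ hC0] at hl0
            rw [div_mul_eq_mul_div, div_le_iff₀ hr0pos]; linarith
    have k2 : 0 ≤ √(l / ‖y‖) := Real.sqrt_nonneg _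
    nlinarith [mul_nonneg hH0.le k2]

/-- The radial derivative of `QQ`. -/
noncomputable def GG (u : E3 → ℝ) (H : ℝ) (p : ℝ × ℝ × E3) : ℝ :=
  fderiv ℝ u (p.2.1 • p.2.2) p.2.2 + p.1 / p.2.1 ^ 2 * u ((p.1 ^ 2 / p.2.1) • p.2.2)
    + (p.1 / p.2.1) * (p.1 ^ 2 / p.2.1 ^ 2) * fderiv ℝ u ((p.1 ^ 2 / p.2.1) • p.2.2) p.2.2
    - H / 2 * √(p.1 / p.2.1) / p.2.1

lemma GG_cont (hu : ContDiffOn ℝ 2 u (ball (0 : E3) R0)) {l : ℝ} {θ : E3} (hl : 0 < l)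
    (h1 : l • θ ∈ ball (0 : E3) R0) :
    ContinuousAt (GG u H) (l, l, θ) := by
  have hc : ContDiffAt ℝ 2 u (l • θ) := hu.contDiffAt (isOpen_ball.mem_nhds h1)
  have c0 : ContinuousAt u (l • θ) := hc.continuousAt
  have c1 : ContinuousAt (fderiv ℝ u) (l • θ) :=
    (hc.fderiv_right (m := 1) (by norm_num)).continuousAt
  have a1 : ContinuousAt (fun p : ℝ × ℝ × E3 => p.1) (l, l, θ) := by fun_prop
  have a2 : ContinuousAt (fun p : ℝ × ℝ × E3 => p.2.1) (l, l, θ) := by fun_prop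
  have a3 : ContinuousAt (fun p : ℝ × ℝ × E3 => p.2.2) (l, l, θ) := by fun_prop
  have b1 : ContinuousAt (fun p : ℝ × ℝ × E3 => p.1 / p.2.1) (l, l, θ) := a1.div a2 hl.ne'
  have b2 : ContinuousAt (fun p : ℝ × ℝ × E3 => p.1 / p.2.1 ^ 2) (l, l, θ) :=
    a1.div (a2.pow 2) (by simp [hl.ne'])
  have b3 : ContinuousAt (fun p : ℝ × ℝ × E3 => p.1 ^ 2 / p.2.1 ^ 2) (l, l, θ) :=
    (a1.pow 2).div (a2.pow 2) (by simp [hl.ne'])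
  have b4 : ContinuousAt (fun p : ℝ × ℝ × E3 => (p.1 ^ 2 / p.2.1) • p.2.2) (l, l, θ) :=
    ((a1.pow 2).div a2 hl.ne').smul a3
  have b5 : ContinuousAt (fun p : ℝ × ℝ × E3 => p.2.1 • p.2.2) (l, l, θ) := a2.smul a3
  have e : (l ^ 2 / l) • θ = l • θ := by congr 1; field_simp
  have f1 : ContinuousAt (fun p : ℝ × ℝ × E3 => u ((p.1 ^ 2 / p.2.1) • p.2.2)) (l, l, θ) :=
    ContinuousAt.comp (g := u) (f := fun p : ℝ × ℝ × E3 => (p.1 ^ 2 / p.2.1) • p.2.2)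
      (x := (l, l, θ)) (by simpa only [e] using c0) b4
  have f2 : ContinuousAt (fun p : ℝ × ℝ × E3 => fderiv ℝ u ((p.1 ^ 2 / p.2.1) • p.2.2)) (l, l, θ) :=
    ContinuousAt.comp (g := fderiv ℝ u) (f := fun p : ℝ × ℝ × E3 => (p.1 ^ 2 / p.2.1) • p.2.2)
      (x := (l, l, θ)) (by simpa only [e] using c1) b4
  have f3 : ContinuousAt (fun p : ℝ × ℝ × E3 => fderiv ℝ u (p.2.1 • p.2.2)) (l, l, θ) :=
    ContinuousAt.comp (g := fderiv ℝ u) (f := fun p : ℝ × ℝ × E3 => p.2.1 • p.2.2)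
      (x := (l, l, θ)) c1 b5
  unfold GG
  exact (((f3.clm_apply a3).add (b2.mul f1)).add ((b1.mul b3).mul (f2.clm_apply a3))).sub
    ((continuousAt_const.mul b1.sqrt).div a2 hl.ne')

lemma QQ_smul {l r : ℝ} {θ : E3} (hr : 0 < r) (hθ : ‖θ‖ = 1) :
    QQ u H l (r • θ) = u (r • θ) - l / r * u ((l ^ 2 / r) • θ) - H * (1 - √(l / r)) := by
  have e : ‖r • θ‖ = r := by rw [norm_smul, hθ, Real.norm_of_nonneg hr.le, mul_one]
  unfold QQ
  rw [e, smul_smul]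
  congr 5
  field_simp

lemma QQ_deriv (hu : ContDiffOn ℝ 2 u (ball (0 : E3) R0)) {l r : ℝ} {θ : E3} (hl : 0 < l)
    (hr : 0 < r) (hθ : ‖θ‖ = 1) (h1 : r • θ ∈ ball (0 : E3) R0)
    (h2 : (l ^ 2 / r) • θ ∈ ball (0 : E3) R0) :
    HasDerivAt (fun r : ℝ => QQ u H l (r • θ)) (GG u H (l, r, θ)) r := by
  have hev : (fun r : ℝ => QQ u H l (r • θ)) =ᶠ[𝓝 r]
      fun r => u (r • θ) - l / r * u ((l ^ 2 / r) • θ) - H * (1 - √(l / r)) := by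
    filter_upwards [lt_mem_nhds hr] with t ht
    exact QQ_smul ht hθ
  refine HasDerivAt.congr_of_eventuallyEq ?_ hev
  have d1 : HasDerivAt (fun r : ℝ => u (r • θ)) (fderiv ℝ u (r • θ) θ) r := by
    have := (C2_d1 isOpen_ball hu h1).comp_hasDerivAt r ((hasDerivAt_id r).smul_const θ)
    exact this.congr_deriv (by simp)
  have di : ∀ c : ℝ, HasDerivAt (fun r : ℝ => c / r) (-c / r ^ 2) r := by
    intro c
    have := (hasDerivAt_inv hr.ne').const_mul c
    refine (this.congr_deriv ?_)
    ring
  have d2 : HasDerivAt (fun r : ℝ => u ((l ^ 2 / r) • θ))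
      (fderiv ℝ u ((l ^ 2 / r) • θ) ((-l ^ 2 / r ^ 2) • θ)) r :=
    (C2_d1 isOpen_ball hu h2).comp_hasDerivAt r ((di (l ^ 2)).smul_const θ)
  have d3 : HasDerivAt (fun r : ℝ => √(l / r)) (-l / r ^ 2 / (2 * √(l / r))) r :=
    (di l).sqrt (by positivity)
  refine ((d1.sub ((di l).mul d2)).sub ((d3.const_sub 1).const_mul H)).congr_deriv ?_
  rw [map_smul, smul_eq_mul]
  unfold GG
  simp only
  have hsq : √(l / r) * √(l / r) = l / r := Real.mul_self_sqrt (by positivity)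
  have hsp : 0 < √(l / r) := Real.sqrt_pos.mpr (by positivity)
  have e : l / r ^ 2 / (2 * √(l / r)) = √(l / r) / 2 / r := by
    rw [show l / r ^ 2 = (√(l / r) * √(l / r)) / r by rw [hsq]; field_simp]
    field_simp
  rw [show -l / r ^ 2 / (2 * √(l / r)) = -(l / r ^ 2 / (2 * √(l / r))) by ring, e]
  ring

lemma deriv_nonneg_right {g : ℝ → ℝ} {x c R : ℝ} (hxR : x < R) (hg : HasDerivAt g c x)
    (h0 : g x = 0) (h : ∀ t, x ≤ t → t ≤ R → 0 ≤ g t) : 0 ≤ c := by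
  have h1 := (hasDerivAt_iff_tendsto_slope.mp hg).mono_left
    (nhdsWithin_mono x (fun y hy => ne_of_gt hy) : 𝓝[>] x ≤ 𝓝[≠] x)
  refine ge_of_tendsto h1 ?_
  filter_upwards [Ioo_mem_nhdsGT hxR] with t ht
  rw [slope_def_field, h0]
  have := h t ht.1.le ht.2.le
  apply div_nonneg <;> linarith [ht.1]

theorem MS.main (h : MS s A C0 L R R0 H m u V) : ∀ l, 0 < l → l ≤ L →
    ∀ y : E3, l ≤ ‖y‖ → ‖y‖ ≤ R → 0 ≤ QQ u H l y := by
  by_contra hcon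
  push Not at hcon
  obtain ⟨l1, hl1, hl1L, y1, hy1, hy1R, hQ1⟩ := hcon
  obtain ⟨l0, hl0, hstart⟩ := h.start
  set T : Set ℝ := {l | 0 < l ∧ l ≤ L ∧ ∃ y : E3, l ≤ ‖y‖ ∧ ‖y‖ ≤ R ∧ QQ u H l y < 0} with hT
  have hTne : T.Nonempty := ⟨l1, hl1, hl1L, y1, hy1, hy1R, hQ1⟩
  have hTlb : ∀ l ∈ T, l0 ≤ l := by
    rintro l ⟨h1, h2, y, h3, h4, h5⟩
    by_contra hlt
    push Not at hlt
    exact absurd (hstart l h1 hlt h2 y h3 h4) (not_le.mpr h5)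
  have hTbdd : BddBelow T := ⟨l0, hTlb⟩
  set lb := sInf T with hlb
  have hlb0 : 0 < lb := hl0.trans_le (le_csInf hTne hTlb)
  have hlbL : lb ≤ L := (csInf_le hTbdd (show l1 ∈ T from ⟨hl1, hl1L, y1, hy1, hy1R, hQ1⟩)).trans hl1L
  have hbelow : ∀ l, 0 < l → l < lb → ∀ y : E3, l ≤ ‖y‖ → ‖y‖ ≤ R → 0 ≤ QQ u H l y := by
    intro l h1 h2 y h3 h4
    by_contra h5
    push Not at h5
    exact absurd (csInf_le hTbdd (show l ∈ T from ⟨h1, h2.le.trans hlbL, y, h3, h4, h5⟩)) (not_le.mpr h2)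
  have hcontQ : ∀ l y, 0 < l → l ≤ L → l ≤ ‖y‖ → ‖y‖ ≤ R →
      ContinuousAt (fun p : ℝ × E3 => QQ u H p.1 p.2) (l, y) := by
    intro l y h1 h2 h3 h4
    exact QQ_cont h.u2.continuousOn (norm_pos_iff.mp (h1.trans_le h3)) (h.mem1 h4) (h.mem2 h1 h2 h3)
  have hat : ∀ y : E3, lb ≤ ‖y‖ → ‖y‖ ≤ R → 0 ≤ QQ u H lb y := by
    intro y hy hyR
    have c2 : ContinuousAt (fun l : ℝ => QQ u H l y) lb :=
      ContinuousAt.comp (g := fun p : ℝ × E3 => QQ u H p.1 p.2) (f := fun l : ℝ => (l, y)) (x := lb)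
        (hcontQ lb y hlb0 hlbL hy hyR) (by fun_prop)
    have c3 : Tendsto (fun l : ℝ => QQ u H l y) (𝓝[<] lb) (𝓝 (QQ u H lb y)) :=
      c2.tendsto.mono_left nhdsWithin_le_nhds
    refine ge_of_tendsto c3 ?_
    filter_upwards [Ioo_mem_nhdsLT hlb0] with l hl
    exact hbelow l hl.1 hl.2 y (hl.2.le.trans hy) hyR
  have himp := h.improve hlb0 hlbL hat
  set q := m - C0 * L / R - H with hq
  have hq0 : 0 < q := by have := h.mH; simp only [hq]; linarith
  have hlbR : lb < R := hlbL.trans_lt h.LR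
  obtain ⟨ls, -, hlst, hlsT⟩ := exists_seq_tendsto_sInf hTne hTbdd
  choose hls0 hlsL ys hys hysR hysQ using hlsT
  obtain ⟨yb, -, φ, hφ, hyt⟩ := (isCompact_closedBall (0 : E3) R).tendsto_subseq
    (x := ys) (fun n => by simpa using hysR n)
  have hlt : Tendsto (fun n => ls (φ n)) atTop (𝓝 lb) := hlst.comp hφ.tendsto_atTop
  have hyt' : Tendsto (fun n => ys (φ n)) atTop (𝓝 yb) := hyt
  have hnt : Tendsto (fun n => ‖ys (φ n)‖) atTop (𝓝 ‖yb‖) := hyt'.norm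
  have hyb : lb ≤ ‖yb‖ := le_of_tendsto_of_tendsto' hlt hnt (fun n => hys _)
  have hybR : ‖yb‖ ≤ R := le_of_tendsto' hnt (fun n => hysR _)
  have hybQ : QQ u H lb yb ≤ 0 := by
    have := (hcontQ lb yb hlb0 hlbL hyb hybR).tendsto.comp (hlt.prodMk_nhds hyt')
    exact le_of_tendsto' this (fun n => (hysQ _).le)
  have hybn : ‖yb‖ = lb := by
    refine le_antisymm ?_ hyb
    have h1 := himp yb hyb hybR
    have hpos : 0 < ‖yb‖ := hlb0.trans_le hyb
    have h2 : 1 - lb / ‖yb‖ ≤ 0 := by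
      by_contra h3
      push Not at h3
      have := mul_pos hq0 h3
      linarith
    rw [sub_nonpos, le_div_iff₀ hpos] at h2
    linarith
  -- directions
  set θ : ℕ → E3 := fun n => (‖ys (φ n)‖)⁻¹ • ys (φ n) with hθ
  set θb : E3 := (‖yb‖)⁻¹ • yb with hθb
  have hθt : Tendsto θ atTop (𝓝 θb) :=
    (hnt.inv₀ (by rw [hybn]; exact hlb0.ne')).smul hyt'
  have hypos : ∀ n, 0 < ‖ys (φ n)‖ := fun n => (hls0 _).trans_le (hys _)
  have hθ1 : ∀ n, ‖θ n‖ = 1 := by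
    intro n
    simp only [hθ]
    rw [norm_smul, norm_inv, norm_norm, inv_mul_cancel₀ (hypos n).ne']
  have hθb1 : ‖θb‖ = 1 := by
    rw [hθb, norm_smul, norm_inv, norm_norm, inv_mul_cancel₀ (by rw [hybn]; exact hlb0.ne')]
  have hyθ : ∀ n, ys (φ n) = ‖ys (φ n)‖ • θ n := by
    intro n
    simp only [hθ]
    rw [smul_smul, mul_inv_cancel₀ (hypos n).ne', one_smul]
  have hmem : ∀ (r : ℝ) (t : E3), ‖t‖ = 1 → 0 < r → r ≤ R → r • t ∈ ball (0 : E3) R0 := by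
    intro r t ht h0 hr
    apply h.mem1
    rw [norm_smul, ht, Real.norm_of_nonneg h0.le, mul_one]; exact hr
  have hself : ∀ l t, 0 < l → ‖t‖ = 1 → QQ u H l (l • t) = 0 := by
    intro l t hl ht
    rw [QQ_smul hl ht, div_self hl.ne', show l ^ 2 / l = l by field_simp]
    simp
  have hder : ∀ l r t, 0 < l → l ≤ r → r ≤ R → ‖t‖ = 1 →
      HasDerivAt (fun r : ℝ => QQ u H l (r • t)) (GG u H (l, r, t)) r := by
    intro l r t hl hlr hr ht
    have hr0 := hl.trans_le hlr
    have h2 : l ^ 2 / r ≤ l := by rw [div_le_iff₀ hr0]; nlinarith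
    exact QQ_deriv h.u2 hl hr0 ht (hmem r t ht hr0 hr)
      (hmem _ t ht (by positivity) (h2.trans (hlr.trans hr)))
  have hξ : ∀ n, ∃ ξ, ls (φ n) ≤ ξ ∧ ξ ≤ ‖ys (φ n)‖ ∧ GG u H (ls (φ n), ξ, θ n) ≤ 0 := by
    intro n
    have hQn := hysQ (φ n)
    rw [hyθ n] at hQn
    have hlt : ls (φ n) < ‖ys (φ n)‖ := by
      refine lt_of_le_of_ne (hys _) ?_
      intro he
      rw [← he, hself _ _ (hls0 _) (hθ1 n)] at hQn
      exact lt_irrefl _ hQn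
    obtain ⟨ξ, hξ, hξe⟩ := exists_hasDerivAt_eq_slope (fun r : ℝ => QQ u H (ls (φ n)) (r • θ n))
      (fun r => GG u H (ls (φ n), r, θ n)) hlt
      (fun r hr => (hder _ r _ (hls0 _) hr.1 (hr.2.trans (hysR _)) (hθ1 n)).continuousAt.continuousWithinAt)
      (fun r hr => hder _ r _ (hls0 _) hr.1.le (hr.2.le.trans (hysR _)) (hθ1 n))
    refine ⟨ξ, hξ.1.le, hξ.2.le, ?_⟩
    rw [hξe, hself _ _ (hls0 _) (hθ1 n)]
    apply div_nonpos_of_nonpos_of_nonneg <;> linarith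
  choose ξ hξ1 hξ2 hξ3 using hξ
  have hξt : Tendsto ξ atTop (𝓝 lb) :=
    tendsto_of_tendsto_of_tendsto_of_le_of_le hlt (by rw [hybn] at hnt; exact hnt) hξ1 hξ2
  have hGc := GG_cont (H := H) h.u2 hlb0 (hmem lb θb hθb1 hlb0 hlbR.le)
  have hG0 : GG u H (lb, lb, θb) ≤ 0 := by
    have := hGc.tendsto.comp (hlt.prodMk_nhds (hξt.prodMk_nhds hθt))
    exact le_of_tendsto' this hξ3
  have hd := hder lb lb θb hlb0 le_rfl hlbR.le hθb1
  have hd2 : HasDerivAt (fun r : ℝ => q * (1 - lb / r)) (q * (lb / lb ^ 2)) lb := by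
    have := (((hasDerivAt_inv hlb0.ne').const_mul lb).const_sub 1).const_mul q
    refine this.congr_deriv ?_
    ring
  have := deriv_nonneg_right hlbR (hd.sub hd2)
    (by simp only [Pi.sub_apply]; rw [hself _ _ hlb0 hθb1, div_self hlb0.ne']; simp) (by
      intro t ht htR
      have e : ‖t • θb‖ = t := by
        rw [norm_smul, hθb1, Real.norm_of_nonneg (hlb0.le.trans ht), mul_one]
      have := himp (t • θb) (by rw [e]; exact ht) (by rw [e]; exact htR)
      rw [e] at this
      simp only [Pi.sub_apply]
      linarith)
  have hpos : 0 < q * (lb / lb ^ 2) := by positivity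
  linarith

theorem MS.final (h : MS s A C0 L R R0 H m u V) (l : ℝ) (hl : 0 < l) (hL : l ≤ L)
    (y : E3) (hy : l ≤ ‖y‖) (hyR : ‖y‖ ≤ R) :
    l / ‖y‖ * u ((l ^ 2 / ‖y‖ ^ 2) • y) ≤ u y := by
  have := h.main l hl hL y hy hyR
  have h2 : 0 ≤ H * (1 - √(l / ‖y‖)) := by
    apply mul_nonneg h.H0.le
    rw [sub_nonneg, Real.sqrt_le_one]
    rw [div_le_one (hl.trans_le hy)]; exact hy
  unfold QQ at this
  linarith
end


lemma lapl_translate (u : E3 → ℝ) (p x : E3) : lapl (fun y => u (p + y)) x = lapl u (p + x) := by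
  unfold lapl
  refine Finset.sum_congr rfl fun i _ => ?_
  have : (fun y => fderiv ℝ (fun z => u (p + z)) y (EuclideanSpace.single i 1)) =
      fun y => (fun w => fderiv ℝ u w (EuclideanSpace.single i 1)) (p + y) := by
    funext y
    rw [fderiv_comp_add_left]
  rw [this, fderiv_comp_add_left (f := fun w => fderiv ℝ u w (EuclideanSpace.single i 1))]

section
variable {s a A L δ M m : ℝ} {u V : E3 → ℝ} {x1 : E3}

lemma core_compare (hs0 : 0 ≤ s) (hs1 : s ≤ 1) (ha : 0 < a) (hA : 0 < A) (hL : 1 ≤ L) (hM : 0 < M)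
    (hV : ∀ x ∈ ball x1 δ, a ≤ V x)
    (hVH : ∀ x ∈ ball x1 δ, ∀ y ∈ ball x1 δ, |V x - V y| ≤ A * ‖x - y‖ ^ s)
    (hu : ContDiffOn ℝ 2 u (ball x1 δ)) (hm : ∀ x ∈ ball x1 δ, m ≤ u x)
    (heq : ∀ x ∈ ball x1 δ, -lapl u x = V x * u x ^ 5)
    (hx1 : u x1 = M) (hu2 : ∀ x ∈ closedBall x1 ((2 * L + 1) / M ^ 2), u x ≤ 2 * M)
    (hδ : (L + 1) / M ^ 2 < δ / 8)
    (hmb : 160 * A * (L + 1) ^ (2 + s) * M ^ (1 - 2 * s) + 8 * (L + 1) / (δ * M) < m)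
    (y : E3) (hy : ‖y - x1‖ ≤ 1 / M ^ 2) : L / (L + 1) * M ≤ u y := by
  have hL0 : 0 < L := by linarith
  have hM2 : 0 < M ^ 2 := by positivity
  rcases eq_or_ne y x1 with rfl | hne
  · rw [hx1]
    have : L / (L + 1) ≤ 1 := by rw [div_le_one (by linarith)]; linarith
    nlinarith
  have hδ0 : 0 < δ := by
    have : 0 < (L + 1) / M ^ 2 := by positivity
    linarith
  set t := ‖y - x1‖ with ht
  have ht0 : 0 < t := by rw [ht, norm_pos_iff, sub_ne_zero]; exact hne
  set e : E3 := t⁻¹ • (y - x1) with he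
  have he1 : ‖e‖ = 1 := by
    rw [he, norm_smul, norm_inv, Real.norm_of_nonneg ht0.le, ← ht, inv_mul_cancel₀ ht0.ne']
  have hye : y - x1 = t • e := by rw [he, smul_smul, mul_inv_cancel₀ ht0.ne', one_smul]
  set ℓ := L / M ^ 2 with hℓ
  have hℓ0 : 0 < ℓ := by positivity
  set p : E3 := x1 - ℓ • e with hp
  have hpn : ‖p - x1‖ = ℓ := by
    rw [hp, sub_sub_cancel_left, norm_neg, norm_smul, he1, Real.norm_of_nonneg hℓ0.le, mul_one]
  have hsum : ℓ + 1 / M ^ 2 = (L + 1) / M ^ 2 := by rw [hℓ]; field_simp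
  have hinv : 0 < 1 / M ^ 2 := by positivity
  have hsub : ∀ z ∈ ball (0 : E3) (δ / 2), p + z ∈ ball x1 δ := by
    intro z hz
    rw [mem_ball_zero_iff] at hz
    rw [mem_ball, dist_eq_norm]
    calc ‖p + z - x1‖ = ‖(p - x1) + z‖ := by congr 1; abel
      _ ≤ ℓ + ‖z‖ := by rw [← hpn]; exact norm_add_le _ _
      _ < δ := by linarith
  have hms : MS s A (2 * M) ((L + 1) / M ^ 2) (δ / 4) (δ / 2)
      (160 * A * (L + 1) ^ (2 + s) * M ^ (1 - 2 * s)) m (fun z => u (p + z)) (fun z => V (p + z)) := by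
    refine ⟨hs0, hs1, hA, by positivity, by linarith, by linarith, ?_, ?_, ?_, ?_, ?_, ?_,
      by positivity, ?_, ?_⟩
    · intro x hx; exact ha.le.trans (hV _ (hsub x hx))
    · intro x hx z hz
      have := hVH _ (hsub x hx) _ (hsub z hz)
      rwa [add_sub_add_left_eq_sub] at this
    · refine hu.comp (contDiff_const.add contDiff_id).contDiffOn ?_
      intro z hz; exact hsub z hz
    · intro x hx; exact hm _ (hsub x hx)
    · intro z hz
      rw [mem_closedBall_zero_iff] at hz
      apply hu2
      rw [mem_closedBall, dist_eq_norm]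
      calc ‖p + z - x1‖ = ‖(p - x1) + z‖ := by congr 1; abel
        _ ≤ ℓ + ‖z‖ := by rw [← hpn]; exact norm_add_le _ _
        _ ≤ L / M ^ 2 + (L + 1) / M ^ 2 := by linarith
        _ = _ := by ring
    · intro x hx
      rw [lapl_translate]; exact heq _ (hsub x hx)
    · have e1 : ((L + 1) / M ^ 2) ^ (2 + s) = (L + 1) ^ (2 + s) * M ^ (-4 - 2 * s) := by
        rw [Real.div_rpow (by linarith) hM2.le, ← Real.rpow_natCast M 2, ← Real.rpow_mul hM.le,
          div_eq_mul_inv, ← Real.rpow_neg hM.le]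
        congr 2; push_cast; ring
      have e2 : M ^ 5 * M ^ (-4 - 2 * s) = M ^ (1 - 2 * s) := by
        rw [← Real.rpow_natCast M 5, ← Real.rpow_add hM]; congr 1; push_cast; ring
      rw [e1]
      have e3 : 4 * A * (2 * M) ^ 5 * ((L + 1) ^ (2 + s) * M ^ (-4 - 2 * s)) =
          128 * (A * (L + 1) ^ (2 + s) * M ^ (1 - 2 * s)) := by
        rw [← e2]; ring
      rw [e3]
      have : 0 < A * (L + 1) ^ (2 + s) * M ^ (1 - 2 * s) := by positivity
      linarith
    · refine lt_of_le_of_lt (le_of_eq ?_) hmb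
      congr 1
      field_simp
      ring
  set l := √(ℓ * (ℓ + t)) with hl
  have hl2 : l ^ 2 = ℓ * (ℓ + t) := Real.sq_sqrt (by positivity)
  have hl0 : 0 < l := Real.sqrt_pos.mpr (by positivity)
  have hlt : l ≤ ℓ + t := by
    apply Real.sqrt_le_iff.mpr ⟨by positivity, by nlinarith⟩
  have hlℓ : ℓ ≤ l := Real.le_sqrt_of_sq_le (by nlinarith)
  have hyp : y - p = (ℓ + t) • e := by
    rw [hp, add_smul, ← hye]; abel
  have hypn : ‖y - p‖ = ℓ + t := by
    rw [hyp, norm_smul, he1, Real.norm_of_nonneg (by positivity), mul_one]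
  have hfin := hms.final l hl0 (by linarith) (y - p) (by rw [hypn]; exact hlt)
    (by rw [hypn]; linarith)
  have hpt : p + (l ^ 2 / ‖y - p‖ ^ 2) • (y - p) = x1 := by
    rw [hypn, hl2, hyp, smul_smul, show ℓ * (ℓ + t) / (ℓ + t) ^ 2 * (ℓ + t) = ℓ by field_simp, hp]
    abel
  simp only [hpt, hx1, add_sub_cancel] at hfin
  rw [hypn] at hfin
  refine le_trans ?_ hfin
  refine mul_le_mul_of_nonneg_right ?_ hM.le
  calc L / (L + 1) = ℓ / (ℓ + 1 / M ^ 2) := by rw [hsum, hℓ]; field_simp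
    _ ≤ ℓ / (ℓ + t) := by gcongr
    _ ≤ l / (ℓ + t) := by gcongr

lemma core (hs0 : 0 ≤ s) (hs1 : s ≤ 1) (ha : 0 < a) (hA : 0 < A) (hL : L = 200 / a + 1) (hM : 0 < M)
    (hV : ∀ x ∈ ball x1 δ, a ≤ V x)
    (hVH : ∀ x ∈ ball x1 δ, ∀ y ∈ ball x1 δ, |V x - V y| ≤ A * ‖x - y‖ ^ s)
    (hu : ContDiffOn ℝ 2 u (ball x1 δ)) (hm : ∀ x ∈ ball x1 δ, m ≤ u x)
    (heq : ∀ x ∈ ball x1 δ, -lapl u x = V x * u x ^ 5)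
    (hx1 : u x1 = M) (hu2 : ∀ x ∈ closedBall x1 ((2 * L + 1) / M ^ 2), u x ≤ 2 * M)
    (hδ : (L + 1) / M ^ 2 < δ / 8)
    (hmb : 160 * A * (L + 1) ^ (2 + s) * M ^ (1 - 2 * s) + 8 * (L + 1) / (δ * M) < m) : False := by
  have hL1 : 1 ≤ L := by rw [hL]; have : 0 < 200 / a := by positivity
                         linarith
  have hcmp := core_compare hs0 hs1 ha hA hL1 hM hV hVH hu hm heq hx1 hu2 hδ hmb
  have hinv : 0 < 1 / M ^ 2 := by positivity
  have hin : 1 / M ^ 2 < δ := by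
    have h1 : 1 / M ^ 2 ≤ (L + 1) / M ^ 2 := by gcongr; linarith
    linarith
  have hsub : closedBall x1 (1 / M ^ 2) ⊆ ball x1 δ := closedBall_subset_ball hin
  set φ : E3 → ℝ := fun y => u y + a * M ^ 5 / 200 * ‖y - x1‖ ^ 2 with hφ
  have hc : ContinuousOn φ (closedBall x1 (1 / M ^ 2)) :=
    (hu.continuousOn.mono hsub).add (by fun_prop)
  obtain ⟨y, hyB, hmin⟩ := (isCompact_closedBall x1 (1 / M ^ 2)).exists_isMinOn
    ⟨x1, mem_closedBall_self hinv.le⟩ hc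
  have h1 : φ y ≤ M := by
    have := hmin (mem_closedBall_self hinv.le : x1 ∈ closedBall x1 (1 / M ^ 2))
    simpa [hφ, hx1] using this
  have hyn : ‖y - x1‖ ≤ 1 / M ^ 2 := by rwa [mem_closedBall, dist_eq_norm] at hyB
  have huy := hcmp y hyn
  have hLL : 1 - a / 200 < L / (L + 1) := by
    rw [lt_div_iff₀ (by linarith), hL]
    have : a / 200 * (200 / a) = 1 := by field_simp
    nlinarith
  rcases eq_or_lt_of_le hyn with h2 | h2
  · have e : a * M ^ 5 / 200 * ‖y - x1‖ ^ 2 = a / 200 * M := by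
      rw [h2]; field_simp
    simp only [hφ] at h1
    rw [e] at h1
    have := mul_lt_mul_of_pos_right hLL hM
    linarith
  · have hloc : IsLocalMin φ y := by
      refine hmin.isLocalMin ?_
      refine mem_of_superset (isOpen_ball.mem_nhds (?_ : y ∈ ball x1 (1 / M ^ 2))) ball_subset_closedBall
      rwa [mem_ball, dist_eq_norm]
    have hHL := (HL_C2 isOpen_ball hu (hsub hyB)).add
      ((HL_normsq x1 y).const_mul (a * M ^ 5 / 200))
    have hnn := hHL.nonneg_of_min hloc
    have hq := heq y (hsub hyB)
    have hhalf : M / 2 ≤ u y := by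
      have : 1 / 2 ≤ L / (L + 1) := by
        rw [div_le_div_iff₀ (by norm_num) (by linarith)]; linarith
      nlinarith
    have h5 : (M / 2) ^ 5 ≤ u y ^ 5 := pow_le_pow_left₀ (by positivity) hhalf 5
    have h6 : a * (M / 2) ^ 5 ≤ V y * u y ^ 5 :=
      mul_le_mul (hV y (hsub hyB)) h5 (by positivity) (ha.le.trans (hV y (hsub hyB)))
    have h7 : 0 < a * M ^ 5 := by positivity
    have h8 : a * (M / 2) ^ 5 = a * M ^ 5 / 32 := by ring
    linarith
end

theorem sup_rpow_mul_inf_le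
    (s : ℝ) (hs₁ : 1 / 2 < s) (hs₂ : s ≤ 1)
    (a b A : ℝ) (ha : 0 < a) (hb : 0 < b) (hA : 0 < A)
    (K : Set (EuclideanSpace ℝ (Fin 3))) (hK : IsCompact K)
    (hKB : K ⊆ ball (0 : EuclideanSpace ℝ (Fin 3)) 1) :
    ∃ c : ℝ, 0 < c ∧
      ∀ (V u : EuclideanSpace ℝ (Fin 3) → ℝ),
        (∀ x ∈ ball (0 : EuclideanSpace ℝ (Fin 3)) 1, a ≤ V x ∧ V x ≤ b) →
        (∀ x ∈ ball (0 : EuclideanSpace ℝ (Fin 3)) 1,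
          ∀ y ∈ ball (0 : EuclideanSpace ℝ (Fin 3)) 1,
            |V x - V y| ≤ A * ‖x - y‖ ^ s) →
        ContDiffOn ℝ 2 u (ball (0 : EuclideanSpace ℝ (Fin 3)) 1) →
        (∀ x ∈ ball (0 : EuclideanSpace ℝ (Fin 3)) 1, 0 < u x) →
        (∀ x ∈ ball (0 : EuclideanSpace ℝ (Fin 3)) 1, -lapl u x = V x * u x ^ 5) →
        (sSup (u '' K)) ^ (2 * s - 1) * sInf (u '' ball (0 : EuclideanSpace ℝ (Fin 3)) 1)
          ≤ c := by
  rcases K.eq_empty_or_nonempty with rfl | hKne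
  · refine ⟨1, one_pos, fun V u _ _ _ _ _ => ?_⟩
    rw [Set.image_empty, Real.sSup_empty, Real.zero_rpow (by linarith)]
    simp
  obtain ⟨xm, hxm, hxmax⟩ := hK.exists_isMaxOn hKne continuous_norm.continuousOn
  have hxm1 : ‖xm‖ < 1 := by simpa using hKB hxm
  set δ := (1 - ‖xm‖) / 2 with hδ
  have hδ0 : 0 < δ := by rw [hδ]; linarith
  have hKδ : ∀ x ∈ K, ‖x‖ ≤ 1 - 2 * δ := by
    intro x hx
    have : ‖x‖ ≤ ‖xm‖ := hxmax hx
    rw [hδ]; linarith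
  set L := 200 / a + 1 with hL
  have hL1 : 1 ≤ L := by
    rw [hL]
    have : 0 < 200 / a := by positivity
    linarith
  have hc1 : 0 < 160 * A * (L + 1) ^ (2 + s) := by positivity
  have hc2 : 0 < 8 * (L + 1) / δ := by positivity
  refine ⟨1 + 160 * A * (L + 1) ^ (2 + s) + 8 * (L + 1) / δ, by positivity, ?_⟩
  intro V u hV hVH hu hpos heq
  by_contra hcon
  push Not at hcon
  set c := 1 + 160 * A * (L + 1) ^ (2 + s) + 8 * (L + 1) / δ with hc
  have hcK : ContinuousOn u K := hu.continuousOn.mono hKB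
  obtain ⟨x0, hx0, hSup, -⟩ := hK.exists_sSup_image_eq_and_ge hKne hcK
  rw [hSup] at hcon
  set m := sInf (u '' ball (0 : E3) 1) with hm
  have hmle : ∀ x ∈ ball (0 : E3) 1, m ≤ u x := by
    intro x hx
    refine csInf_le ⟨0, ?_⟩ ⟨x, hx, rfl⟩
    rintro _ ⟨z, hz, rfl⟩
    exact (hpos z hz).le
  set S := u x0 with hS
  have hS0 : 0 < S := hpos x0 (hKB hx0)
  have hmS : m ≤ S := hmle x0 (hKB hx0)
  have hSc : c < S ^ (2 * s) := by
    calc c < S ^ (2 * s - 1) * m := hcon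
      _ ≤ S ^ (2 * s - 1) * S := mul_le_mul_of_nonneg_left hmS (by positivity)
      _ = S ^ (2 * s) := by rw [← Real.rpow_add_one hS0.ne']; congr 1; ring
  have hS1 : 1 < S := by
    by_contra h
    push Not at h
    have := Real.rpow_le_one hS0.le h (show 0 ≤ 2 * s by linarith)
    linarith
  have hS2 : c < S ^ 2 := by
    refine hSc.trans_le ?_
    rw [← Real.rpow_natCast S 2]
    exact Real.rpow_le_rpow_of_exponent_le hS1.le (by push_cast; linarith)
  -- selection of a good point
  have hx0n := hKδ x0 hx0
  have hsubB : closedBall x0 δ ⊆ ball (0 : E3) 1 := by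
    intro x hx
    rw [mem_closedBall, dist_eq_norm] at hx
    rw [mem_ball_zero_iff]
    have : ‖x‖ ≤ ‖x - x0‖ + ‖x0‖ := norm_le_norm_sub_add x x0
    linarith
  have hFc : ContinuousOn (fun x => (δ - ‖x - x0‖) * u x ^ 2) (closedBall x0 δ) :=
    ContinuousOn.mul (by fun_prop) ((hu.continuousOn.mono hsubB).pow 2)
  obtain ⟨x1, hx1, hmax⟩ := (isCompact_closedBall x0 δ).exists_isMaxOn
    ⟨x0, mem_closedBall_self hδ0.le⟩ hFc
  have hF0 : δ * S ^ 2 ≤ (δ - ‖x1 - x0‖) * u x1 ^ 2 := by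
    have := hmax (mem_closedBall_self hδ0.le : x0 ∈ closedBall x0 δ)
    simpa using this
  set M := u x1 with hM
  have hM0 : 0 < M := hpos x1 (hsubB hx1)
  have hSM : S ≤ M := by
    have h1 : δ * S ^ 2 ≤ δ * M ^ 2 := by
      refine hF0.trans (mul_le_mul_of_nonneg_right ?_ (by positivity))
      linarith [norm_nonneg (x1 - x0)]
    have h2 : S ^ 2 ≤ M ^ 2 := le_of_mul_le_mul_left h1 hδ0
    exact le_of_sq_le_sq h2 hM0.le
  have hM1 : 1 < M := hS1.trans_le hSM
  have hM2 : c < M ^ 2 := hS2.trans_le (by gcongr)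
  have hx1n : ‖x1 - x0‖ ≤ δ := by rwa [mem_closedBall, dist_eq_norm] at hx1
  have hsub1 : ball x1 δ ⊆ ball (0 : E3) 1 := by
    intro x hx
    rw [mem_ball, dist_eq_norm] at hx
    rw [mem_ball_zero_iff]
    have h1 : ‖x‖ ≤ ‖x - x1‖ + ‖x1‖ := norm_le_norm_sub_add x x1
    have h2 : ‖x1‖ ≤ ‖x1 - x0‖ + ‖x0‖ := norm_le_norm_sub_add x1 x0
    linarith
  have hcδ : 8 * (L + 1) < δ * S ^ 2 := by
    have : 8 * (L + 1) / δ < S ^ 2 := by linarith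
    rw [div_lt_iff₀ hδ0] at this
    linarith
  refine core (s := s) (a := a) (A := A) (L := L) (δ := δ) (M := M) (m := m) (u := u) (V := V)
    (x1 := x1) (by linarith) hs₂ ha hA hL hM0 (fun x hx => (hV x (hsub1 hx)).1)
    (fun x hx y hy => hVH x (hsub1 hx) y (hsub1 hy)) (hu.mono hsub1)
    (fun x hx => hmle x (hsub1 hx)) (fun x hx => heq x (hsub1 hx)) rfl ?_ ?_ ?_
  · intro x hx
    rw [mem_closedBall, dist_eq_norm] at hx
    set σ := (δ - ‖x1 - x0‖) / 2 with hσ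
    have hσM : 4 * (L + 1) < σ * M ^ 2 := by rw [hσ]; linarith
    have hσ0 : 0 < σ := by
      by_contra h
      push Not at h
      have := mul_nonpos_of_nonpos_of_nonneg h (sq_nonneg M)
      linarith
    have hxσ : ‖x - x1‖ ≤ σ := by
      refine hx.trans ?_
      rw [div_le_iff₀ (by positivity)]; linarith
    have h3 : ‖x - x0‖ ≤ ‖x - x1‖ + ‖x1 - x0‖ := norm_sub_le_norm_sub_add_norm_sub x x1 x0
    have h4 : σ ≤ δ - ‖x - x0‖ := by rw [hσ] at hxσ ⊢; linarith
    have hxB : x ∈ closedBall x0 δ := by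
      rw [mem_closedBall, dist_eq_norm]; linarith
    have h5 : (δ - ‖x - x0‖) * u x ^ 2 ≤ (δ - ‖x1 - x0‖) * M ^ 2 := hmax hxB
    have h6 : σ * u x ^ 2 ≤ σ * (2 * M ^ 2) := by
      have := mul_le_mul_of_nonneg_right h4 (sq_nonneg (u x))
      have e : δ - ‖x1 - x0‖ = 2 * σ := by rw [hσ]; ring
      rw [e] at h5
      linarith
    have h7 : u x ^ 2 ≤ 2 * M ^ 2 := le_of_mul_le_mul_left h6 hσ0
    refine le_of_sq_le_sq ?_ (by positivity)
    nlinarith [sq_nonneg M]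
  · rw [div_lt_iff₀ (by positivity)]
    have : δ * S ^ 2 ≤ δ * M ^ 2 := by gcongr
    linarith
  · have hm0 : 0 < m := by
      by_contra h
      push Not at h
      have := mul_nonpos_of_nonneg_of_nonpos (show 0 ≤ S ^ (2 * s - 1) by positivity) h
      linarith
    have h1 : c < M ^ (2 * s - 1) * m := by
      refine hcon.trans_le (mul_le_mul_of_nonneg_right ?_ hm0.le)
      exact Real.rpow_le_rpow hS0.le hSM (by linarith)
    have h2 : M ^ (1 - 2 * s) * M ^ (2 * s - 1) = 1 := by
      rw [← Real.rpow_add hM0]; ring_nf; simp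
    have hp1 : 0 < M ^ (1 - 2 * s) := by positivity
    have h3 : c * M ^ (1 - 2 * s) < m := by
      have := mul_lt_mul_of_pos_left h1 hp1
      rw [← mul_assoc, h2, one_mul] at this
      linarith
    have h4 : 1 / M ≤ M ^ (1 - 2 * s) := by
      rw [one_div, ← Real.rpow_neg_one]
      exact Real.rpow_le_rpow_of_exponent_le hM1.le (by linarith)
    have h5 : 8 * (L + 1) / (δ * M) ≤ 8 * (L + 1) / δ * M ^ (1 - 2 * s) := by
      calc 8 * (L + 1) / (δ * M) = 8 * (L + 1) / δ * (1 / M) := by field_simp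
        _ ≤ _ := mul_le_mul_of_nonneg_left h4 hc2.le
    rw [hc] at h3
    nlinarith
end

section
/- Let B be the open unit ball of ℝ³ and let s = 1/2. For all positive real numbers a, b, m there exists δ = δ(a, b, m) > 0 such that: for every compact set K ⊂ B there is a constant c = c(a, b, m, K) with the property that for every function V : B → ℝ with a ≤ V(x) ≤ b for all x ∈ B and |V(x) − V(y)| ≤ A|x − y|^{1/2} for all x, y ∈ B with some A ∈ (0, δ], and every u ∈ C²(B) satisfying u ≥ m in B and −∑ᵢ ∂²u/∂xᵢ² = V u⁵ in B, one has sup_K u ≤ c. -/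
open MeasureTheory Metric Real

local notation "E3" => EuclideanSpace ℝ (Fin 3)

/-- Second derivative necessary condition at a local minimum. -/
theorem aux_min {f f' : ℝ → ℝ} {v : ℝ} (hmin : IsLocalMin f 0)
    (h1 : ∀ᶠ t in nhds (0:ℝ), HasDerivAt f (f' t) t) (h2 : HasDerivAt f' v 0) : 0 ≤ v := by
  by_contra hv
  push Not at hv
  have hd : deriv f =ᶠ[nhds 0] f' := h1.mono fun t ht => ht.deriv
  have hdd : deriv (deriv f) 0 = v := by
    rw [hd.deriv_eq]; exact h2.deriv
  have hc : ContinuousAt f 0 := h1.self_of_nhds.continuousAt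
  have hmax := isLocalMax_of_deriv_deriv_neg (f := f) (x₀ := 0) (by rw [hdd]; exact hv)
    hmin.deriv_eq_zero hc
  have heq : f =ᶠ[nhds 0] fun _ => f 0 := by
    filter_upwards [hmin, hmax] with t h1 h2 using le_antisymm h2 h1
  have h3 : deriv f =ᶠ[nhds 0] fun _ => (0:ℝ) := by
    have := heq.deriv
    simpa using this
  have := h3.deriv_eq
  rw [hdd] at this
  simp at this
  linarith

/-- Derivative of the inverse norm along a coordinate line. -/
theorem aux_q (y : E3) (i : Fin 3) (hy : y ≠ 0) :
    HasDerivAt (fun s : ℝ => ‖y + s • EuclideanSpace.single i (1:ℝ)‖⁻¹)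
      (-(y i) * (‖y‖⁻¹)^3) 0 := by
  have h0 : HasDerivAt (fun s : ℝ => y + s • EuclideanSpace.single i (1:ℝ))
      (EuclideanSpace.single i (1:ℝ)) 0 := by
    simpa using ((hasDerivAt_id (0:ℝ)).smul_const (EuclideanSpace.single i (1:ℝ) : E3)).const_add y
  have h1 := h0.norm_sq
  have hn : ‖y‖ ≠ 0 := norm_ne_zero_iff.2 hy
  have h2 := (h1.sqrt (by simp [hn])).fun_inv (by simp [hn])
  simp only [Real.sqrt_sq (norm_nonneg _)] at h2
  refine h2.congr_deriv ?_
  simp [EuclideanSpace.inner_single_right]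
  field_simp

theorem aux_shift {F : Type*} [NormedAddCommGroup F] [NormedSpace ℝ F] {f : E3 → F} {e y : E3} {d : F} {t : ℝ}
    (h : HasDerivAt (fun s : ℝ => f ((y + t • e) + s • e)) d 0) :
    HasDerivAt (fun s : ℝ => f (y + s • e)) d t := by
  have h2 : HasDerivAt (fun s : ℝ => s - t) 1 t := (hasDerivAt_id t).sub_const t
  have h3 := HasDerivAt.scomp (h := fun s : ℝ => s - t) t (by simpa using h) h2
  simp only [one_smul] at h3
  convert h3 using 1
  funext s
  simp [Function.comp, sub_smul]

/-- Kelvin reflection. -/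
noncomputable def kPhi (lam : ℝ) (z : E3) : E3 := (lam^2*(‖z‖⁻¹)^2) • z

/-- The comparison function of the moving sphere argument. -/
noncomputable def kF (U : E3 → ℝ) (lam D η : ℝ) (z : E3) : ℝ :=
  U z - lam*‖z‖⁻¹ * U (kPhi lam z) - D*(lam⁻¹ - ‖z‖⁻¹)^2 - η*(‖z‖^2 - lam^2)

noncomputable def kP (U : E3 → ℝ) (lam D η : ℝ) (i : Fin 3) (z : E3) : ℝ :=
  fderiv ℝ U z (EuclideanSpace.single i 1)
   - (-lam * (z i * (‖z‖⁻¹)^3) * U (kPhi lam z)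
      + lam^3*((‖z‖⁻¹)^3 * fderiv ℝ U (kPhi lam z) (EuclideanSpace.single i 1))
      - 2*lam^3*((z i * (‖z‖⁻¹)^5) * fderiv ℝ U (kPhi lam z) z))
   - 2*D*((lam⁻¹ - ‖z‖⁻¹)*(z i * (‖z‖⁻¹)^3)) - 2*η*z i

noncomputable def kV (U : E3 → ℝ) (lam D η : ℝ) (i : Fin 3) (z : E3) : ℝ :=
  let e : E3 := EuclideanSpace.single i 1
  let q := ‖z‖⁻¹
  let p := fderiv ℝ U (kPhi lam z)
  let H := fderiv ℝ (fderiv ℝ U) (kPhi lam z)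
  fderiv ℝ (fderiv ℝ U) z e e
   - (-lam * ((q^3 - 3*(z i)^2*q^5) * U (kPhi lam z)
         + (z i * q^3) * (lam^2*q^2*p e - 2*lam^2*z i*q^4*p z))
      + lam^3*(-3*z i*q^5 * p e + q^3*(lam^2*q^2*H e e - 2*lam^2*z i*q^4*H z e))
      - 2*lam^3*((q^5 - 5*(z i)^2*q^7)*p z
         + (z i*q^5)*(lam^2*q^2*H e z - 2*lam^2*z i*q^4*H z z + p e)))
   - 2*D*((z i)^2*q^6 + (lam⁻¹ - q)*(q^3 - 3*(z i)^2*q^5)) - 2*η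

section
variable (z : E3) (i : Fin 3)

theorem aux_line : HasDerivAt (fun s : ℝ => z + s • EuclideanSpace.single i (1:ℝ))
      (EuclideanSpace.single i (1:ℝ)) 0 := by
  simpa using ((hasDerivAt_id (0:ℝ)).smul_const (EuclideanSpace.single i (1:ℝ) : E3)).const_add z

theorem aux_coord : HasDerivAt (fun s : ℝ => (z + s • EuclideanSpace.single i (1:ℝ)) i) 1 0 := by
  simpa using ((hasDerivAt_id (0:ℝ)).const_add (z i))

theorem aux_phi (lam : ℝ) (hz : z ≠ 0) :
    HasDerivAt (fun s : ℝ => kPhi lam (z + s • EuclideanSpace.single i (1:ℝ)))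
      ((lam^2*(‖z‖⁻¹)^2) • (EuclideanSpace.single i (1:ℝ) : E3)
        - (2*lam^2*z i*(‖z‖⁻¹)^4) • z) 0 := by
  have h := (((aux_q z i hz).fun_pow 2).const_mul (lam^2)).fun_smul (aux_line z i)
  unfold kPhi
  refine h.congr_deriv ?_
  simp only [zero_smul, add_zero]
  rw [sub_eq_add_neg, ← neg_smul]
  congr 2
  simp; ring

theorem aux_P {U : E3 → ℝ} (lam D η : ℝ) (hz : z ≠ 0) (h1 : DifferentiableAt ℝ U z)
    (h2 : DifferentiableAt ℝ U (kPhi lam z)) :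
    HasDerivAt (fun s : ℝ => kF U lam D η (z + s • EuclideanSpace.single i (1:ℝ)))
      (kP U lam D η i z) 0 := by
  have a1 := HasFDerivAt.comp_hasDerivAt (l := U) (0:ℝ) (by simpa using h1.hasFDerivAt) (aux_line z i)
  have a2 := HasFDerivAt.comp_hasDerivAt (l := U) (0:ℝ) (by simpa using h2.hasFDerivAt) (aux_phi z i lam hz)
  have hq := aux_q z i hz
  have hn := (aux_line z i).norm_sq
  have := ((a1.fun_sub ((hq.const_mul lam).fun_mul a2)).fun_sub
    (((hq.const_sub lam⁻¹).fun_pow 2).const_mul D)).fun_sub ((hn.sub_const (lam^2)).const_mul η)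
  unfold kF
  refine this.congr_deriv ?_
  simp [kP, EuclideanSpace.inner_single_right]
  ring

theorem aux_V {U : E3 → ℝ} (lam D η : ℝ) (hz : z ≠ 0) (h1 : ContDiffAt ℝ 2 U z)
    (h2 : ContDiffAt ℝ 2 U (kPhi lam z)) :
    HasDerivAt (fun s : ℝ => kP U lam D η i (z + s • EuclideanSpace.single i (1:ℝ)))
      (kV U lam D η i z) 0 := by
  have d1 : DifferentiableAt ℝ (fderiv ℝ U) z :=
    (h1.fderiv_right (m := 1) (by norm_num)).differentiableAt (by norm_num)
  have d2 : DifferentiableAt ℝ (fderiv ℝ U) (kPhi lam z) :=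
    (h2.fderiv_right (m := 1) (by norm_num)).differentiableAt (by norm_num)
  have a1 := HasFDerivAt.comp_hasDerivAt (l := fderiv ℝ U) (0:ℝ)
    (by simpa using d1.hasFDerivAt) (aux_line z i)
  have a2 := HasFDerivAt.comp_hasDerivAt (l := U) (0:ℝ)
    (by simpa using (h2.differentiableAt (by norm_num)).hasFDerivAt) (aux_phi z i lam hz)
  have a3 := HasFDerivAt.comp_hasDerivAt (l := fderiv ℝ U) (0:ℝ)
    (by simpa using d2.hasFDerivAt) (aux_phi z i lam hz)
  have hq := aux_q z i hz
  have hc := aux_coord z i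
  have b1 := a1.clm_apply (hasDerivAt_const (0:ℝ) (EuclideanSpace.single i (1:ℝ) : E3))
  have b3 := a3.clm_apply (hasDerivAt_const (0:ℝ) (EuclideanSpace.single i (1:ℝ) : E3))
  have b4 := a3.clm_apply (aux_line z i)
  have hcq := hc.fun_mul (hq.fun_pow 3)
  have hcq5 := hc.fun_mul (hq.fun_pow 5)
  have := ((b1.fun_sub ((((hcq.const_mul (-lam)).fun_mul a2).fun_add
      (((hq.fun_pow 3).fun_mul b3).const_mul (lam^3))).fun_sub
      ((hcq5.fun_mul b4).const_mul (2*lam^3)))).fun_sub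
    (((hq.const_sub lam⁻¹).fun_mul hcq).const_mul (2*D))).fun_sub (hc.const_mul (2*η))
  unfold kP
  refine this.congr_deriv ?_
  simp [kV]
  ring

theorem aux_sum {U : E3 → ℝ} (lam D η : ℝ) (hz : z ≠ 0) :
    ∑ i, kV U lam D η i z =
      ∑ i, fderiv ℝ (fderiv ℝ U) z (EuclideanSpace.single i 1) (EuclideanSpace.single i 1)
      - (lam*‖z‖⁻¹)^5 * ∑ i, fderiv ℝ (fderiv ℝ U) (kPhi lam z) (EuclideanSpace.single i 1)
          (EuclideanSpace.single i 1) - 2*D*(‖z‖⁻¹)^4 - 6*η := by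
  have hn : ‖z‖ ≠ 0 := norm_ne_zero_iff.2 hz
  have hq : (‖z‖⁻¹)^2 * (z 0^2 + z 1^2 + z 2^2) = 1 := by
    have : ‖z‖^2 = z 0^2 + z 1^2 + z 2^2 := by
      rw [EuclideanSpace.norm_sq_eq, Fin.sum_univ_three]; simp
    rw [← this]; field_simp
  have hs : z = z 0 • EuclideanSpace.single 0 (1:ℝ) + z 1 • EuclideanSpace.single 1 (1:ℝ)
      + z 2 • (EuclideanSpace.single 2 (1:ℝ) : E3) := by
    ext j; fin_cases j <;> simp
  simp only [kV, Fin.sum_univ_three]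
  generalize fderiv ℝ (fderiv ℝ U) (kPhi lam z) = H
  generalize fderiv ℝ U (kPhi lam z) = p
  generalize fderiv ℝ (fderiv ℝ U) z = H0
  generalize U (kPhi lam z) = w
  generalize ‖z‖⁻¹ = q at hq ⊢
  have e1 : p z = z 0 * p (EuclideanSpace.single 0 1) + z 1 * p (EuclideanSpace.single 1 1)
      + z 2 * p (EuclideanSpace.single 2 1) := by
    conv_lhs => rw [hs]
    simp
  have e2 : H z z = z 0 * H (EuclideanSpace.single 0 1) z + z 1 * H (EuclideanSpace.single 1 1) z
      + z 2 * H (EuclideanSpace.single 2 1) z := by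
    conv_lhs => rw [show H z = H (z 0 • EuclideanSpace.single 0 (1:ℝ) + z 1 • EuclideanSpace.single 1 (1:ℝ)
      + z 2 • (EuclideanSpace.single 2 (1:ℝ) : E3)) by rw [← hs]]
    simp
  have e3 : H z z = z 0 * H z (EuclideanSpace.single 0 1) + z 1 * H z (EuclideanSpace.single 1 1)
      + z 2 * H z (EuclideanSpace.single 2 1) := by
    conv_lhs => rw [show H z z = H z (z 0 • EuclideanSpace.single 0 (1:ℝ) + z 1 • EuclideanSpace.single 1 (1:ℝ)
      + z 2 • (EuclideanSpace.single 2 (1:ℝ) : E3)) by rw [← hs]]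
    simp
  generalize H z z = hzz at *
  generalize p z = pz at *
  generalize H z (EuclideanSpace.single 0 1) = c0 at *
  generalize H z (EuclideanSpace.single 1 1) = c1 at *
  generalize H z (EuclideanSpace.single 2 1) = c2 at *
  generalize H (EuclideanSpace.single 0 1) z = d0 at *
  generalize H (EuclideanSpace.single 1 1) z = d1 at *
  generalize H (EuclideanSpace.single 2 1) z = d2 at *
  generalize p (EuclideanSpace.single 0 1) = p0 at *
  generalize p (EuclideanSpace.single 1 1) = p1 at *
  generalize p (EuclideanSpace.single 2 1) = p2 at *
  linear_combination (-3*lam*q^3*w - 12*lam^3*q^5*pz - 4*lam^5*q^7*hzz - 2*D*q^4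
    + 6*D*(lam⁻¹-q)*q^3) * hq - 6*lam^3*q^5*e1 - 2*lam^5*q^7*e2 - 2*lam^5*q^7*e3
end

theorem aux_locmin {U : E3 → ℝ} (z : E3) (lam D η : ℝ) (hz : z ≠ 0) (h1 : ContDiffAt ℝ 2 U z)
    (h2 : ContDiffAt ℝ 2 U (kPhi lam z)) (hmin : IsLocalMin (kF U lam D η) z) :
    0 ≤ ∑ i, kV U lam D η i z := by
  refine Finset.sum_nonneg fun i _ => ?_
  have hl : Filter.Tendsto (fun s : ℝ => z + s • EuclideanSpace.single i (1:ℝ)) (nhds 0) (nhds z) := by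
    simpa [ContinuousAt] using (aux_line z i).continuousAt
  have hp : Filter.Tendsto (fun s : ℝ => kPhi lam (z + s • EuclideanSpace.single i (1:ℝ))) (nhds 0)
      (nhds (kPhi lam z)) := by
    simpa [ContinuousAt] using (aux_phi z i lam hz).continuousAt
  refine aux_min (f := fun s : ℝ => kF U lam D η (z + s • EuclideanSpace.single i (1:ℝ)))
    (f' := fun s => kP U lam D η i (z + s • EuclideanSpace.single i (1:ℝ))) ?_ ?_
    (aux_V z i lam D η hz h1 h2)
  · have := hl.eventually hmin
    filter_upwards [this] with t ht
    simpa using ht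
  · have e1 := hl.eventually (h1.eventually (by simp))
    have e2 := hp.eventually (h2.eventually (by simp))
    have e3 := hl.eventually (isOpen_ne.mem_nhds hz)
    filter_upwards [e1, e2, e3] with t t1 t2 t3
    exact aux_shift (aux_P _ i lam D η t3 (t1.differentiableAt (by norm_num))
      (t2.differentiableAt (by norm_num)))

/-- Hypotheses for the moving sphere argument around the origin. -/
structure MSHyp (U W : E3 → ℝ) (r0 L M m A b : ℝ) : Prop where
  r1 : r0 ≤ 1
  L0 : 0 < L
  Lr : L < r0
  M0 : 0 < M
  m0 : 0 < m
  A0 : 0 < A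
  b0 : 0 < b
  smooth : ∀ z, ‖z‖ ≤ r0 → ContDiffAt ℝ 2 U z
  low : ∀ z, ‖z‖ ≤ r0 → m ≤ U z
  W0 : ∀ z, ‖z‖ ≤ r0 → 0 ≤ W z
  Wb : ∀ z, ‖z‖ ≤ r0 → W z ≤ b
  hol : ∀ z, ‖z‖ ≤ r0 → ∀ z', ‖z'‖ ≤ r0 → |W z - W z'| ≤ A * √‖z - z'‖
  eqn : ∀ z, ‖z‖ ≤ r0 → ∑ i, fderiv ℝ (fderiv ℝ U) z (EuclideanSpace.single i 1)
    (EuclideanSpace.single i 1) = - (W z * U z ^ 5)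
  up : ∀ z, ‖z‖ ≤ L → U z ≤ 2 * M
  n1 : L / r0 * (2 * M) ≤ m / 4
  n2 : 16 * A * M^5 * √L * L^2 ≤ m / 4

theorem kPhi_norm {lam : ℝ} {z : E3} (hz : z ≠ 0) : ‖kPhi lam z‖ = lam^2 * ‖z‖⁻¹ := by
  have hn : ‖z‖ ≠ 0 := norm_ne_zero_iff.2 hz
  rw [kPhi, norm_smul, Real.norm_of_nonneg (by positivity)]
  field_simp

theorem kPhi_le {lam : ℝ} {z : E3} (h0 : 0 < lam) (h : lam ≤ ‖z‖) : ‖kPhi lam z‖ ≤ lam := by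
  have hz : 0 < ‖z‖ := h0.trans_le h
  rw [kPhi_norm (norm_pos_iff.1 hz), ← div_eq_mul_inv, div_le_iff₀ hz]
  nlinarith

theorem kPhi_sub {lam : ℝ} {z : E3} (h0 : 0 < lam) (h : lam ≤ ‖z‖) : ‖z - kPhi lam z‖ ≤ ‖z‖ := by
  have hz : 0 < ‖z‖ := h0.trans_le h
  have : z - kPhi lam z = (1 - lam^2*(‖z‖⁻¹)^2) • z := by rw [kPhi, sub_smul, one_smul]
  rw [this, norm_smul]
  have h1 : 0 ≤ lam^2*(‖z‖⁻¹)^2 := by positivity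
  have h2 : lam^2*(‖z‖⁻¹)^2 ≤ 1 := by
    rw [← mul_pow, ← div_eq_mul_inv]
    exact pow_le_one₀ (by positivity) ((div_le_one hz).2 h)
  have : ‖1 - lam^2*(‖z‖⁻¹)^2‖ ≤ 1 := by
    rw [Real.norm_eq_abs, abs_le]; constructor <;> linarith
  nlinarith

/-- Coefficient of the barrier. -/
noncomputable def kD (A M lam : ℝ) : ℝ := 16 * A * M^5 * √lam * lam^4

theorem aux_pow5 {x g f c : ℝ} (hx : 0 ≤ x) (hg : 0 ≤ g) (hgc : g ≤ c) (hf : 0 ≤ f) (h : g ≤ x + f) :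
    g^5 - x^5 ≤ 5 * c^4 * f := by
  rcases le_total g x with h1 | h1
  · have : g^5 ≤ x^5 := pow_le_pow_left₀ hg h1 5
    have : 0 ≤ 5 * c^4 * f := by positivity
    linarith
  · have e : g^5 - x^5 = (g-x)*(g^4+g^3*x+g^2*x^2+g*x^3+x^4) := by ring
    have hxc : x ≤ c := h1.trans hgc
    have hc : 0 ≤ c := hg.trans hgc
    have : g^4+g^3*x+g^2*x^2+g*x^3+x^4 ≤ c^4+c^3*c+c^2*c^2+c*c^3+c^4 := by gcongr
    rw [e]
    calc (g-x)*(g^4+g^3*x+g^2*x^2+g*x^3+x^4) ≤ f * (c^4+c^3*c+c^2*c^2+c*c^3+c^4) := by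
          apply mul_le_mul (by linarith) this (by positivity) hf
      _ = 5 * c^4 * f := by ring

theorem kF_step1 {U W : E3 → ℝ} {r0 L M m A b : ℝ} (H : MSHyp U W r0 L M m A b) {lam : ℝ}
    (h0 : 0 < lam) (hL : lam ≤ L) {z : E3} (hz1 : lam < ‖z‖) (hz2 : ‖z‖ < r0)
    (hmin : IsLocalMin (kF U lam (kD A M lam) (m/8)) z) (hneg : kF U lam (kD A M lam) (m/8) z < 0) :
    kF U lam (kD A M lam) (m/8) z ≤ -((6*(m/8))/(b*(5*(2*M)^4))) := by
  have hM := H.M0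
  have hm := H.m0
  have hA := H.A0
  have hb := H.b0
  have hzp : 0 < ‖z‖ := h0.trans hz1
  have hz : z ≠ 0 := norm_pos_iff.1 hzp
  have hphi := kPhi_le h0 hz1.le
  have hphir : ‖kPhi lam z‖ ≤ r0 := by linarith [H.Lr]
  have hs := aux_locmin z lam (kD A M lam) (m/8) hz (H.smooth z hz2.le) (H.smooth _ hphir) hmin
  rw [aux_sum z lam _ _ hz, H.eqn z hz2.le, H.eqn _ hphir] at hs
  have hx := H.low z hz2.le
  have hw := H.low _ hphir
  have hwu := H.up _ (hphi.trans hL)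
  have hV0 := H.W0 z hz2.le
  have hVb := H.Wb z hz2.le
  have hhol := H.hol z hz2.le _ hphir
  have hsub := Real.sqrt_le_sqrt (kPhi_sub h0 hz1.le)
  set x := U z
  set w := U (kPhi lam z)
  set q := ‖z‖⁻¹ with hq
  have hq0 : 0 < q := by positivity
  have hlq : lam * q ≤ 1 := by
    rw [hq, ← div_eq_mul_inv]; exact (div_le_one hzp).2 hz1.le
  have hw0 : 0 < w := hm.trans_le hw
  have hg0 : 0 ≤ lam * q * w := by positivity
  have hgc : lam * q * w ≤ 2 * M := by nlinarith
  have hF : kF U lam (kD A M lam) (m/8) z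
      = x - lam*q*w - kD A M lam*(lam⁻¹ - q)^2 - m/8*(‖z‖^2 - lam^2) := rfl
  set f := kF U lam (kD A M lam) (m/8) z
  have hD0 : 0 ≤ kD A M lam := by unfold kD; positivity
  have hgx : lam*q*w ≤ x + (-f) := by
    have : 0 ≤ kD A M lam*(lam⁻¹ - q)^2 := by positivity
    have : 0 ≤ m/8*(‖z‖^2 - lam^2) := mul_nonneg (by positivity) (by nlinarith)
    linarith
  have h5 := aux_pow5 (hm.le.trans hx) hg0 hgc (by linarith) hgx
  -- the error term
  have herr : |W z - W (kPhi lam z)| * (lam*q*w)^5 ≤ 2 * kD A M lam * q^4 := by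
    have k1 : |W z - W (kPhi lam z)| ≤ A * √‖z‖ := hhol.trans (by gcongr)
    have k2 : w^5 ≤ (2*M)^5 := by gcongr
    have k3 : √‖z‖ * (lam * q) ≤ √lam := by
      have e1 : √lam ≤ √‖z‖ := Real.sqrt_le_sqrt hz1.le
      have e2 : √lam * √lam = lam := Real.mul_self_sqrt h0.le
      have e3 : √‖z‖ * √‖z‖ = ‖z‖ := Real.mul_self_sqrt hzp.le
      have e4 : √‖z‖ * (lam * q) = √‖z‖ * lam / ‖z‖ := by rw [hq]; ring
      rw [e4, div_le_iff₀ hzp]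
      calc √‖z‖ * lam = √lam * (√lam * √‖z‖) := by linear_combination (-√‖z‖) * e2
        _ ≤ √lam * (√‖z‖ * √‖z‖) := by gcongr
        _ = _ := by rw [e3]
    calc |W z - W (kPhi lam z)| * (lam*q*w)^5 ≤ (A * √‖z‖) * ((lam*q)^5*(2*M)^5) := by
          rw [mul_pow _ w]; gcongr
      _ = 32*A*M^5*(lam*q)^4 * (√‖z‖*(lam*q)) := by ring
      _ ≤ 32*A*M^5*(lam*q)^4 * √lam := by gcongr
      _ = _ := by unfold kD; ring
  have habs : -(|W z - W (kPhi lam z)| * (lam*q*w)^5) ≤ (W z - W (kPhi lam z)) * (lam*q*w)^5 := by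
    have := neg_abs_le (W z - W (kPhi lam z))
    nlinarith [pow_nonneg hg0 5]
  have hfin : 6*(m/8) ≤ W z * ((lam*q*w)^5 - x^5) := by nlinarith [hs, herr, habs]
  have : W z * ((lam*q*w)^5 - x^5) ≤ b * (5*(2*M)^4*(-f)) := by
    calc _ ≤ W z * (5*(2*M)^4*(-f)) := by gcongr
      _ ≤ _ := by
        apply mul_le_mul_of_nonneg_right hVb
        have : 0 < -f := by linarith
        positivity
  rw [le_neg, div_le_iff₀ (by positivity)]
  linarith

theorem kbar {A M lam : ℝ} (hA : 0 < A) (hM : 0 < M) (h0 : 0 < lam) {z : E3} (hz : lam ≤ ‖z‖) :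
    kD A M lam*(lam⁻¹ - ‖z‖⁻¹)^2 ≤ 16 * A * M^5 * √lam * lam^2 := by
  have hzp : 0 < ‖z‖ := h0.trans_le hz
  have h1 : 0 ≤ lam⁻¹ - ‖z‖⁻¹ := sub_nonneg.2 (inv_anti₀ h0 hz)
  have h2 : lam⁻¹ - ‖z‖⁻¹ ≤ lam⁻¹ := by
    have : 0 < ‖z‖⁻¹ := by positivity
    linarith
  calc kD A M lam*(lam⁻¹ - ‖z‖⁻¹)^2 ≤ kD A M lam*(lam⁻¹)^2 := by
        unfold kD; gcongr
    _ = _ := by unfold kD; field_simp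

theorem kF_lower {U W : E3 → ℝ} {r0 L M m A b : ℝ} (H : MSHyp U W r0 L M m A b) {lam : ℝ}
    (h0 : 0 < lam) (hL : lam ≤ L) {z : E3} (hz1 : lam ≤ ‖z‖) (hz2 : ‖z‖ ≤ r0) {τ : ℝ} (hτ : 0 < τ)
    (hzτ : τ ≤ ‖z‖) (hlτ : lam / τ * (2*M) ≤ m/4) :
    0 < kF U lam (kD A M lam) (m/8) z := by
  have hM := H.M0
  have hm := H.m0
  have hA := H.A0
  have hzp : 0 < ‖z‖ := h0.trans_le hz1
  have hphi := kPhi_le h0 hz1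
  have hphir : ‖kPhi lam z‖ ≤ r0 := by linarith [H.Lr]
  have hx := H.low z hz2
  have hw := H.low _ hphir
  have hwu := H.up _ (hphi.trans hL)
  have hb := kbar hA hM h0 hz1
  have hb2 : 16 * A * M^5 * √lam * lam^2 ≤ m/4 := by
    refine le_trans ?_ H.n2
    gcongr
  have hk : lam * ‖z‖⁻¹ * U (kPhi lam z) ≤ m/4 := by
    refine le_trans ?_ hlτ
    rw [div_eq_mul_inv]
    have : ‖z‖⁻¹ ≤ τ⁻¹ := inv_anti₀ hτ hzτ
    have : 0 ≤ U (kPhi lam z) := by linarith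
    gcongr
  have hsq : ‖z‖^2 ≤ 1 := pow_le_one₀ hzp.le (hz2.trans H.r1)
  unfold kF
  nlinarith [sq_nonneg lam]

theorem kF_step2 {U W : E3 → ℝ} {r0 L M m A b : ℝ} (H : MSHyp U W r0 L M m A b) :
    ContinuousOn (fun p : ℝ × E3 => kF U p.1 (kD A M p.1) (m/8) p.2)
      {p | 0 < p.1 ∧ p.1 ≤ L ∧ p.1 ≤ ‖p.2‖ ∧ ‖p.2‖ ≤ r0} := by
  have hU : ContinuousOn U {z | ‖z‖ ≤ r0} := fun z hz =>
    (H.smooth z hz).continuousAt.continuousWithinAt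
  set S := {p : ℝ × E3 | 0 < p.1 ∧ p.1 ≤ L ∧ p.1 ≤ ‖p.2‖ ∧ ‖p.2‖ ≤ r0}
  have hi : ContinuousOn (fun p : ℝ × E3 => ‖p.2‖⁻¹) S :=
    (continuous_snd.norm.continuousOn).inv₀ fun p hp => (hp.1.trans_le hp.2.2.1).ne'
  have hi1 : ContinuousOn (fun p : ℝ × E3 => p.1⁻¹) S :=
    (continuous_fst.continuousOn).inv₀ fun p hp => hp.1.ne'
  have h1 : ContinuousOn (fun p : ℝ × E3 => U p.2) S :=
    hU.comp continuous_snd.continuousOn fun p hp => hp.2.2.2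
  have hphi : ContinuousOn (fun p : ℝ × E3 => kPhi p.1 p.2) S := by
    unfold kPhi; fun_prop
  have h2 : ContinuousOn (fun p : ℝ × E3 => U (kPhi p.1 p.2)) S :=
    hU.comp hphi fun p hp => by
      have := kPhi_le hp.1 hp.2.2.1
      have h3 := H.Lr
      have h4 := hp.2.1
      show ‖_‖ ≤ r0
      linarith
  have h3 : ContinuousOn (fun p : ℝ × E3 => 16 * A * M ^ 5 * √p.1 * p.1 ^ 4 * (p.1⁻¹ - ‖p.2‖⁻¹) ^ 2) S := by
    fun_prop
  have h4 : ContinuousOn (fun p : ℝ × E3 => m / 8 * (‖p.2‖ ^ 2 - p.1 ^ 2)) S := by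
    fun_prop
  exact ((h1.sub ((continuous_fst.continuousOn.mul hi).mul h2)).sub h3).sub h4

theorem kF_step3 {U W : E3 → ℝ} {r0 L M m A b : ℝ} (H : MSHyp U W r0 L M m A b) {lam : ℝ}
    (h0 : 0 < lam) (hL : lam ≤ L) {z : E3} (hz1 : lam ≤ ‖z‖) (hz2 : ‖z‖ ≤ r0)
    (hneg : kF U lam (kD A M lam) (m/8) z < 0) :
    ∃ z', lam ≤ ‖z'‖ ∧ ‖z'‖ ≤ r0 ∧
      kF U lam (kD A M lam) (m/8) z' ≤ -((6*(m/8))/(b*(5*(2*M)^4))) := by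
  set S := {z : E3 | lam ≤ ‖z‖ ∧ ‖z‖ ≤ r0} with hS
  have hSc : IsCompact S := by
    refine (isCompact_closedBall (0:E3) r0).of_isClosed_subset ?_ ?_
    · exact (isClosed_le continuous_const continuous_norm).inter
        (isClosed_le continuous_norm continuous_const)
    · intro z hz; simpa using hz.2
  have hcont : ContinuousOn (kF U lam (kD A M lam) (m/8)) S :=
    (kF_step2 H).comp (f := fun z : E3 => (lam, z)) (by fun_prop)
      fun z hz => ⟨h0, hL, hz.1, hz.2⟩
  obtain ⟨z', hz', hmin⟩ := hSc.exists_isMinOn ⟨z, hz1, hz2⟩ hcont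
  have hneg' : kF U lam (kD A M lam) (m/8) z' < 0 := (hmin ⟨hz1, hz2⟩).trans_lt hneg
  refine ⟨z', hz'.1, hz'.2, ?_⟩
  have hr0 : 0 < r0 := H.L0.trans H.Lr
  have ho : ‖z'‖ < r0 := by
    refine lt_of_le_of_ne hz'.2 fun he => ?_
    have := kF_lower H h0 hL hz'.1 hz'.2 hr0 he.ge (by
      refine le_trans ?_ H.n1
      have := H.M0
      gcongr)
    linarith
  have hi : lam < ‖z'‖ := by
    refine lt_of_le_of_ne hz'.1 fun he => ?_
    have : kF U lam (kD A M lam) (m/8) z' = 0 := by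
      have hne : ‖z'‖ ≠ 0 := by rw [← he]; exact h0.ne'
      have hp : kPhi lam z' = z' := by
        unfold kPhi; rw [he]
        rw [← mul_pow, mul_inv_cancel₀ hne]; simp
      unfold kF
      rw [hp, ← he, mul_inv_cancel₀ h0.ne']; ring
    linarith
  refine kF_step1 H h0 hL hi ho ?_ hneg'
  refine hmin.isLocalMin ?_
  have : {z : E3 | lam < ‖z‖ ∧ ‖z‖ < r0} ∈ nhds z' :=
    ((isOpen_lt continuous_const continuous_norm).inter
        (isOpen_lt continuous_norm continuous_const)).mem_nhds ⟨hi, ho⟩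
  exact Filter.mem_of_superset this fun z hz => ⟨hz.1.le, hz.2.le⟩

theorem kF_start {U W : E3 → ℝ} {r0 L M m A b : ℝ} (H : MSHyp U W r0 L M m A b) {ε : ℝ} (hε : 0 < ε) :
    ∃ l0, 0 < l0 ∧ ∀ lam, 0 < lam → lam ≤ l0 → lam ≤ L → ∀ z : E3, lam ≤ ‖z‖ → ‖z‖ ≤ r0 →
      -ε < kF U lam (kD A M lam) (m/8) z := by
  have hM := H.M0
  have hm := H.m0
  have hA := H.A0
  have hr0 : 0 < r0 := H.L0.trans H.Lr
  have hc := (H.smooth 0 (by simpa using hr0.le)).continuousAt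
  obtain ⟨τ0, hτ0, hτ⟩ := Metric.continuousAt_iff.1 hc (ε/8) (by positivity)
  set τ := min τ0 (min 1 (2*ε/m)) with hτd
  have hτp : 0 < τ := by positivity
  have hτ1 : τ ≤ τ0 := min_le_left _ _
  have hτ2 : τ ≤ 1 := (min_le_right _ _).trans (min_le_left _ _)
  have hτ3 : τ ≤ 2*ε/m := (min_le_right _ _).trans (min_le_right _ _)
  refine ⟨min 1 (min (m/4*τ/(2*M)) (ε/4/(16*A*M^5))), by positivity, ?_⟩
  intro lam h0 hl hL z hz1 hz2
  have hl1 : lam ≤ 1 := hl.trans (min_le_left _ _)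
  have hl2 : lam ≤ m/4*τ/(2*M) := hl.trans ((min_le_right _ _).trans (min_le_left _ _))
  have hl3 : lam ≤ ε/4/(16*A*M^5) := hl.trans ((min_le_right _ _).trans (min_le_right _ _))
  rcases le_total τ ‖z‖ with hz | hz
  · have := kF_lower H h0 hL hz1 hz2 hτp hz (by
      rw [le_div_iff₀ (by positivity)] at hl2
      rw [div_mul_eq_mul_div, div_le_iff₀ hτp]; exact hl2)
    linarith
  rcases hz.eq_or_lt with he | hz
  · have := kF_lower H h0 hL hz1 hz2 hτp he.ge (by
      rw [le_div_iff₀ (by positivity)] at hl2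
      rw [div_mul_eq_mul_div, div_le_iff₀ hτp]; exact hl2)
    linarith
  have hphi := kPhi_le h0 hz1
  have hphir : ‖kPhi lam z‖ ≤ r0 := by linarith [H.Lr]
  have hw := H.low _ hphir
  have a1 := hτ (x := z) (by simpa using hz.trans_le hτ1)
  have a2 := hτ (x := kPhi lam z) (by simpa using (hphi.trans hz1).trans_lt (hz.trans_le hτ1))
  rw [Real.dist_eq, abs_lt] at a1 a2
  have hzp : 0 < ‖z‖ := h0.trans_le hz1
  have hlq : lam * ‖z‖⁻¹ ≤ 1 := by
    rw [← div_eq_mul_inv]; exact (div_le_one hzp).2 hz1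
  have hk : lam * ‖z‖⁻¹ * U (kPhi lam z) ≤ U (kPhi lam z) :=
    mul_le_of_le_one_left (by linarith) hlq
  have hb := kbar hA hM h0 hz1
  have hb2 : 16 * A * M^5 * √lam * lam^2 ≤ ε/4 := by
    rw [le_div_iff₀ (by positivity)] at hl3
    have s1 : √lam ≤ 1 := Real.sqrt_le_one.2 hl1
    calc 16 * A * M^5 * √lam * lam^2 ≤ 16*A*M^5*1*(lam*1) := by
          rw [pow_two lam]; gcongr
      _ ≤ _ := by linarith
  have hb3 : m/8*(‖z‖^2 - lam^2) ≤ ε/4 := by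
    rw [le_div_iff₀ hm] at hτ3
    have : ‖z‖^2 ≤ τ * 1 := by rw [pow_two]; gcongr; linarith
    nlinarith [sq_nonneg lam]
  unfold kF
  linarith

/-- The moving sphere conclusion. -/
theorem kMain {U W : E3 → ℝ} {r0 L M m A b : ℝ} (H : MSHyp U W r0 L M m A b) {lam : ℝ}
    (h0 : 0 < lam) (hL : lam ≤ L) {z : E3} (hz1 : lam ≤ ‖z‖) (hz2 : ‖z‖ ≤ r0) :
    lam * ‖z‖⁻¹ * U (kPhi lam z) ≤ U z := by
  have hM := H.M0
  have hm := H.m0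
  have hA := H.A0
  have hbb := H.b0
  suffices hF : 0 ≤ kF U lam (kD A M lam) (m/8) z by
    unfold kF at hF
    have : 0 ≤ kD A M lam*(lam⁻¹ - ‖z‖⁻¹)^2 := by unfold kD; positivity
    have : 0 ≤ m/8*(‖z‖^2 - lam^2) := mul_nonneg (by positivity) (by nlinarith)
    linarith
  by_contra hneg
  push Not at hneg
  set ε := (6*(m/8))/(b*(5*(2*M)^4)) with hεd
  have hε : 0 < ε := by positivity
  obtain ⟨l0, hl0, hstart⟩ := kF_start H hε
  set S := {p : ℝ × E3 | l0 ≤ p.1 ∧ p.1 ≤ L ∧ p.1 ≤ ‖p.2‖ ∧ ‖p.2‖ ≤ r0} with hS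
  have hSc : IsCompact S := by
    refine ((isCompact_Icc (a := l0) (b := L)).prod
      (isCompact_closedBall (0:E3) r0)).of_isClosed_subset ?_ ?_
    · exact (isClosed_le continuous_const continuous_fst).inter
        ((isClosed_le continuous_fst continuous_const).inter
          ((isClosed_le continuous_fst continuous_snd.norm).inter
            (isClosed_le continuous_snd.norm continuous_const)))
    · intro p hp
      exact ⟨⟨hp.1, hp.2.1⟩, by simpa using hp.2.2.2⟩
  have hcont : ContinuousOn (fun p : ℝ × E3 => kF U p.1 (kD A M p.1) (m/8) p.2) S :=
    (kF_step2 H).mono fun p hp => ⟨hl0.trans_le hp.1, hp.2⟩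
  have hTc : IsCompact (S ∩ (fun p : ℝ × E3 => kF U p.1 (kD A M p.1) (m/8) p.2) ⁻¹' Set.Iic (-ε)) :=
    hSc.of_isClosed_subset (hcont.preimage_isClosed_of_isClosed hSc.isClosed isClosed_Iic)
      Set.inter_subset_left
  have key : ∀ lam, 0 < lam → lam ≤ L → ∀ z : E3, lam ≤ ‖z‖ → ‖z‖ ≤ r0 →
      kF U lam (kD A M lam) (m/8) z < 0 → l0 < lam ∧ ∃ z', (lam, z') ∈
        (S ∩ (fun p : ℝ × E3 => kF U p.1 (kD A M p.1) (m/8) p.2) ⁻¹' Set.Iic (-ε)) := by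
    intro lam h0 hL z hz1 hz2 hneg
    obtain ⟨z', h1, h2, h3⟩ := kF_step3 H h0 hL hz1 hz2 hneg
    have hl : l0 < lam := by
      by_contra hc
      push Not at hc
      have := hstart lam h0 hc hL z' h1 h2
      linarith
    exact ⟨hl, z', ⟨hl.le, hL, h1, h2⟩, h3⟩
  obtain ⟨-, z1, hz1m⟩ := key lam h0 hL z hz1 hz2 hneg
  obtain ⟨⟨l, y⟩, hly, hmin⟩ := hTc.exists_isMinOn ⟨_, hz1m⟩ continuous_fst.continuousOn
  obtain ⟨⟨g1, g2, g3, g4⟩, g5⟩ := hly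
  simp only at g1 g2 g3 g4
  have g5' : kF U l (kD A M l) (m/8) y ≤ -ε := g5
  have hlp : 0 < l := hl0.trans_le g1
  have hyp : 0 < ‖y‖ := hlp.trans_le g3
  obtain ⟨hll, -⟩ := key l hlp g2 y g3 g4 (by linarith)
  -- continuity in `l`
  have hc1 : ContinuousOn (fun s : ℝ => kF U s (kD A M s) (m/8) y) (Set.Icc l0 l) :=
    hcont.comp (f := fun s : ℝ => (s, y)) (by fun_prop) fun s hs =>
      ⟨hs.1, hs.2.trans g2, hs.2.trans g3, g4⟩
  have hc2 := (hc1 l ⟨g1, le_rfl⟩).tendsto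
  have hev := hc2.eventually (gt_mem_nhds (show kF U l (kD A M l) (m/8) y < 0 by linarith))
  have : (nhdsWithin l (Set.Ico l0 l)).NeBot := by
    rw [← mem_closure_iff_nhdsWithin_neBot, closure_Ico hll.ne]
    exact ⟨g1, le_rfl⟩
  have hev2 := hev.filter_mono (nhdsWithin_mono l (Set.Ico_subset_Icc_self))
  obtain ⟨s, hs1, hs2⟩ := (hev2.and self_mem_nhdsWithin).exists
  obtain ⟨-, y', hy'⟩ := key s (hl0.trans_le hs2.1) (hs2.2.le.trans g2) y (hs2.2.le.trans g3) g4 hs1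
  have : l ≤ s := hmin hy'
  linarith [hs2.2]

theorem aux_quad {U : E3 → ℝ} (z : E3) (κ : ℝ) (h1 : ContDiffAt ℝ 2 U z)
    (hmin : IsLocalMin (fun z => U z + κ * ‖z‖^2) z) :
    0 ≤ (∑ i, fderiv ℝ (fderiv ℝ U) z (EuclideanSpace.single i 1) (EuclideanSpace.single i 1))
      + 6 * κ := by
  have d1 : DifferentiableAt ℝ (fderiv ℝ U) z :=
    (h1.fderiv_right (m := 1) (by norm_num)).differentiableAt (by norm_num)
  have key : ∀ i : Fin 3, 0 ≤ fderiv ℝ (fderiv ℝ U) z (EuclideanSpace.single i 1)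
      (EuclideanSpace.single i 1) + 2 * κ := by
    intro i
    have hl : Filter.Tendsto (fun s : ℝ => z + s • EuclideanSpace.single i (1:ℝ)) (nhds 0) (nhds z) := by
      simpa [ContinuousAt] using (aux_line z i).continuousAt
    refine aux_min (f := fun s : ℝ => U (z + s • EuclideanSpace.single i (1:ℝ))
        + κ * ‖z + s • EuclideanSpace.single i (1:ℝ)‖^2)
      (f' := fun s => fderiv ℝ U (z + s • EuclideanSpace.single i (1:ℝ)) (EuclideanSpace.single i (1:ℝ))
        + 2 * κ * (z + s • EuclideanSpace.single i (1:ℝ)) i) ?_ ?_ ?_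
    · have := hl.eventually hmin
      filter_upwards [this] with t ht
      simpa using ht
    · have e1 := hl.eventually (h1.eventually (by simp))
      filter_upwards [e1] with t t1
      have hd := t1.differentiableAt (by norm_num)
      refine aux_shift (f := fun z => U z + κ * ‖z‖^2) ?_
      generalize z + t • EuclideanSpace.single i (1:ℝ) = y at hd
      have a1 := HasFDerivAt.comp_hasDerivAt (l := U) (0:ℝ) (by simpa using hd.hasFDerivAt) (aux_line y i)
      have hn := (aux_line y i).norm_sq
      refine (a1.fun_add (hn.const_mul κ)).congr_deriv ?_
      simp [EuclideanSpace.inner_single_right]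
      ring
    · have a1 := HasFDerivAt.comp_hasDerivAt (l := fderiv ℝ U) (0:ℝ)
        (by simpa using d1.hasFDerivAt) (aux_line z i)
      have b1 := a1.clm_apply (hasDerivAt_const (0:ℝ) (EuclideanSpace.single i (1:ℝ) : E3))
      refine (b1.fun_add ((aux_coord z i).const_mul (2*κ))).congr_deriv ?_
      simp
  have := Finset.sum_nonneg (fun i (_ : i ∈ Finset.univ) => key i)
  rw [Finset.sum_add_distrib] at this
  simp at this
  linarith

theorem fderiv2_shift (u : E3 → ℝ) (x z : E3) :
    fderiv ℝ (fderiv ℝ (fun z => u (x + z))) z = fderiv ℝ (fderiv ℝ u) (x + z) := by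
  have : fderiv ℝ (fun z => u (x + z)) = fun z => fderiv ℝ u (x + z) := by
    funext z; exact fderiv_comp_add_left x
  rw [this]; exact fderiv_comp_add_left x

set_option maxHeartbeats 1000000 in
theorem core_s2 {a b m σ c A ℓ : ℝ} (ha : 0 < a) (hb : 0 < b) (hm : 0 < m) (hℓ : 0 < ℓ)
    (haℓ : a * ℓ^2 = 256) (hσ : 0 < σ) (hσ1 : σ ≤ 1) (hc1 : 1 ≤ c) (hc2 : 16 * ℓ ≤ c * (σ * m))
    (hc3 : 6 * ℓ ≤ σ * c) (hA : 0 < A) (hA2 : A * (256 * ℓ^2 * √(2*ℓ)) ≤ m)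
    {V u : E3 → ℝ} {xs : E3} (hxs : ‖xs‖ + 3 * σ < 1)
    (hV : ∀ x, ‖x‖ < 1 → a ≤ V x ∧ V x ≤ b)
    (hH : ∀ x, ‖x‖ < 1 → ∀ y, ‖y‖ < 1 → |V x - V y| ≤ A * √‖x - y‖)
    (hu : ∀ x, ‖x‖ < 1 → ContDiffAt ℝ 2 u x)
    (hlow : ∀ x, ‖x‖ < 1 → m ≤ u x)
    (heq : ∀ x, ‖x‖ < 1 → ∑ i, fderiv ℝ (fderiv ℝ u) x (EuclideanSpace.single i 1)
      (EuclideanSpace.single i 1) = - (V x * u x ^ 5)) : u xs ≤ c := by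
  by_contra hcon
  push Not at hcon
  -- selection of a good point
  have hball : ∀ x, ‖x - xs‖ ≤ 3*σ → ‖x‖ < 1 := by
    intro x hx
    have : x = xs + (x - xs) := by abel
    have := norm_add_le xs (x - xs)
    rw [add_sub_cancel] at this
    linarith
  have hcontu : ContinuousOn u (closedBall xs σ) := fun x hx => by
    refine (hu x (hball x ?_)).continuousAt.continuousWithinAt
    rw [mem_closedBall, dist_eq_norm] at hx; linarith
  obtain ⟨x0, hx0, hmax⟩ := (isCompact_closedBall xs σ).exists_isMaxOn
    ⟨xs, mem_closedBall_self hσ.le⟩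
    (f := fun x => (σ - ‖x - xs‖) * u x ^ 2) (by fun_prop)
  rw [mem_closedBall, dist_eq_norm] at hx0
  set M := u x0 with hMd
  set d := σ - ‖x0 - xs‖ with hd
  have hmaxs : σ * u xs ^ 2 ≤ d * M ^ 2 := by
    have := hmax (mem_closedBall_self hσ.le)
    simpa using this
  have hdσ : d ≤ σ := by have := norm_nonneg (x0 - xs); linarith
  have hd0 : 0 ≤ d := by linarith
  have hMm : m ≤ M := hlow x0 (hball _ (by linarith))
  have hM0 : 0 < M := hm.trans_le hMm
  have hcM : c < M := by
    have h1 : σ * u xs ^ 2 ≤ σ * M ^ 2 := hmaxs.trans (by gcongr)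
    have h2 : u xs ^ 2 ≤ M ^ 2 := le_of_mul_le_mul_left h1 hσ
    exact hcon.trans_le (le_of_sq_le_sq h2 hM0.le)
  have hdM : 6 * ℓ ≤ d * M^2 := by
    refine le_trans ?_ hmaxs
    have : c ≤ u xs ^ 2 := by nlinarith
    calc 6 * ℓ ≤ σ * c := hc3
      _ ≤ _ := by gcongr
  have hdpos : 0 < d := by
    by_contra h
    have : d = 0 := le_antisymm (not_lt.1 h) hd0
    rw [this] at hdM; linarith
  set ρ := ℓ / M^2 with hρ
  have hρ0 : 0 < ρ := by positivity
  have hρM : ρ * M^2 = ℓ := by rw [hρ]; field_simp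
  have h6ρ : 6 * ρ ≤ d := by
    rw [hρ, ← mul_div_assoc, div_le_iff₀ (by positivity)]; exact hdM
  have hup : ∀ x, ‖x - x0‖ ≤ 3 * ρ → u x ≤ 2 * M := by
    intro x hx
    have h1 : ‖x - xs‖ ≤ ‖x0 - xs‖ + 3*ρ := by
      have := norm_add_le (x - x0) (x0 - xs)
      rw [sub_add_sub_cancel] at this; linarith
    have h2 : d / 2 ≤ σ - ‖x - xs‖ := by linarith
    have h3 : x ∈ closedBall xs σ := by rw [mem_closedBall, dist_eq_norm]; linarith
    have h4 : (σ - ‖x - xs‖) * u x ^ 2 ≤ d * M^2 := hmax h3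
    have h5 : d/2 * u x ^ 2 ≤ d * M^2 := le_trans (by gcongr) h4
    have h6 : u x ^ 2 ≤ 2 * M^2 := by
      have : d * u x ^ 2 ≤ d * (2 * M^2) := by linarith
      exact le_of_mul_le_mul_left this hdpos
    exact le_of_sq_le_sq (by nlinarith) (by positivity)
  -- lower bound via moving spheres
  have hlowM : ∀ y, ‖y - x0‖ ≤ ρ → M / 2 ≤ u y := by
    intro y hy
    rcases eq_or_ne y x0 with rfl | hne
    · linarith
    set t := ‖y - x0‖ with ht
    have ht0 : 0 < t := norm_pos_iff.2 (sub_ne_zero.2 hne)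
    set x := x0 - (y - x0) with hx
    have hxx0 : ‖x - x0‖ = t := by
      rw [hx, ht, ← norm_neg]; congr 1; abel
    have hin : ∀ z : E3, ‖z‖ ≤ σ → ‖x + z‖ < 1 := by
      intro z hz
      apply hball
      have e : x + z - xs = z + ((x - x0) + (x0 - xs)) := by abel
      have h1 := norm_add_le z ((x - x0) + (x0 - xs))
      have h2 := norm_add_le (x - x0) (x0 - xs)
      rw [e]; linarith
    have H : MSHyp (fun z => u (x + z)) (fun z => V (x + z)) σ (2*ρ) M m A b := by
      refine ⟨hσ1, by positivity, by linarith, hM0, hm, hA, hb, ?_, ?_, ?_, ?_, ?_, ?_, ?_, ?_, ?_⟩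
      · intro z hz
        have := hu _ (hin z hz)
        exact this.comp z (by fun_prop)
      · intro z hz; exact hlow _ (hin z hz)
      · intro z hz; exact ha.le.trans (hV _ (hin z hz)).1
      · intro z hz; exact (hV _ (hin z hz)).2
      · intro z hz z' hz'
        have := hH _ (hin z hz) _ (hin z' hz')
        rwa [add_sub_add_left_eq_sub] at this
      · intro z hz
        rw [fderiv2_shift]
        exact heq _ (hin z hz)
      · intro z hz
        apply hup
        have e : x + z - x0 = z + (x - x0) := by abel
        have h1 := norm_add_le z (x - x0)
        rw [e]; linarith
      · rw [div_mul_eq_mul_div, div_le_iff₀ hσ]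
        have e : 2 * ρ * (2 * M) * M = 4 * ℓ := by rw [← hρM]; ring
        have : 16 * ℓ ≤ M * (σ * m) := hc2.trans (by gcongr)
        have : 2 * ρ * (2 * M) * M ≤ (m/4*σ) * M := by rw [e]; linarith
        exact le_of_mul_le_mul_right this hM0
      · have e1 : √(2*ρ) * M = √(2*ℓ) := by
          rw [← hρM, ← mul_assoc, Real.sqrt_mul' (2*ρ) (sq_nonneg M), Real.sqrt_sq hM0.le]
        have e2 : 16 * A * M^5 * √(2*ρ) * (2*ρ)^2 = A * (64 * ℓ^2 * √(2*ℓ)) := by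
          rw [← e1, ← hρM]; ring
        rw [e2]; linarith
    have hlam0 : 0 < √2 * t := by positivity
    have hs2 : √2 * √2 = 2 := Real.mul_self_sqrt (by norm_num)
    have hs2' : √2 ≤ 2 := by nlinarith [Real.sqrt_nonneg 2]
    have hs1 : 1 ≤ √2 := by rw [Real.one_le_sqrt]; norm_num
    have hz : ‖(2:ℝ) • (y - x0)‖ = 2 * t := by rw [norm_smul]; simp [ht]
    have := kMain H hlam0 (by nlinarith) (z := (2:ℝ) • (y - x0)) (by rw [hz]; nlinarith)
      (by rw [hz]; linarith)
    have hphi : kPhi (√2 * t) ((2:ℝ) • (y - x0)) = y - x0 := by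
      rw [kPhi, hz, smul_smul]
      have : (√2 * t)^2 * ((2*t)⁻¹)^2 * 2 = 1 := by
        have e : t * t⁻¹ = 1 := mul_inv_cancel₀ ht0.ne'
        rw [mul_inv]
        linear_combination (1/2 * (t*t⁻¹)^2) * hs2 + (t*t⁻¹ + 1) * e
      rw [this, one_smul]
    rw [hphi, hz] at this
    have e1 : x + (y - x0) = x0 := by rw [hx]; abel
    have e2 : x + (2:ℝ) • (y - x0) = y := by rw [hx, two_smul]; abel
    simp only [e1, e2] at this
    have e3 : √2 * t * (2*t)⁻¹ = √2/2 := by field_simp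
    rw [e3] at this
    have : 1/2 * M ≤ √2/2 * u x0 := by rw [← hMd]; gcongr
    linarith
  -- contradiction with the strong source term
  set κ := a * M^5 / 256 with hκ
  have hκ0 : 0 < κ := by positivity
  have hκρ : κ * ρ^2 = M := by
    have : κ * ρ^2 = (a * ℓ^2) * M / 256 := by rw [hκ, ← hρM]; ring
    rw [this, haℓ]; ring
  have hin2 : ∀ z : E3, ‖z‖ ≤ ρ → ‖x0 + z‖ < 1 := by
    intro z hz
    apply hball
    have e : x0 + z - xs = z + (x0 - xs) := by abel
    have h1 := norm_add_le z (x0 - xs)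
    rw [e]; linarith
  have hsm : ∀ z : E3, ‖z‖ ≤ ρ → ContDiffAt ℝ 2 (fun z => u (x0 + z)) z := by
    intro z hz
    exact (hu _ (hin2 z hz)).comp z (by fun_prop)
  have hc : ContinuousOn (fun z => u (x0 + z)) (closedBall (0:E3) ρ) := fun z hz =>
    (hsm z (by simpa using hz)).continuousAt.continuousWithinAt
  obtain ⟨z, hz, hmin⟩ := (isCompact_closedBall (0:E3) ρ).exists_isMinOn
    ⟨0, mem_closedBall_self hρ0.le⟩ (f := fun z => u (x0 + z) + κ * ‖z‖^2)
    (hc.add (by fun_prop))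
  have hzn : ‖z‖ ≤ ρ := by simpa using hz
  have hle : u (x0 + z) + κ * ‖z‖^2 ≤ M := by
    have := hmin (mem_closedBall_self hρ0.le)
    simpa using this
  have huz : M / 2 ≤ u (x0 + z) := hlowM _ (by simpa using hzn)
  have hlt : ‖z‖ < ρ := by
    refine lt_of_le_of_ne hzn fun he => ?_
    rw [he, hκρ] at hle
    linarith
  have hloc := hmin.isLocalMin (closedBall_mem_nhds_of_mem (by simpa using hlt))
  have hfin := aux_quad z κ (hsm z hzn) hloc
  rw [fderiv2_shift, heq _ (hin2 z hzn)] at hfin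
  have h5 : (M/2)^5 ≤ u (x0+z)^5 := by gcongr
  have h6 : a * (M/2)^5 ≤ V (x0+z) * u (x0+z)^5 := by
    have := (hV _ (hin2 z hzn)).1
    exact mul_le_mul this h5 (by positivity) (ha.le.trans this)
  have h7 : a * (M/2)^5 = 8 * κ := by rw [hκ]; ring
  linarith

/-- On the unit ball `B` of `ℝ³`, for `a, b, m > 0` there is
`δ = δ(a,b,m) > 0` such that for every compact `K ⊆ B` there is `c = c(a,b,m,K)`
with: for every `A ∈ (0, δ]`, every `V` with `a ≤ V ≤ b` which is `1/2`-Hölder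
with constant `A`, and every `C²` solution `u ≥ m` of `Δu = V u⁵` in `B`,
one has `sup_K u ≤ c`. -/
theorem sup_le_of_small_holder_const
    (a b m : ℝ) (ha : 0 < a) (hb : 0 < b) (hm : 0 < m) :
    ∃ δ : ℝ, 0 < δ ∧
      ∀ K : Set (EuclideanSpace ℝ (Fin 3)), IsCompact K →
        K ⊆ ball (0 : EuclideanSpace ℝ (Fin 3)) 1 →
        ∃ c : ℝ, ∀ (A : ℝ), 0 < A → A ≤ δ →
          ∀ (V u : EuclideanSpace ℝ (Fin 3) → ℝ),
            (∀ x ∈ ball (0 : EuclideanSpace ℝ (Fin 3)) 1, a ≤ V x ∧ V x ≤ b) →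
            (∀ x ∈ ball (0 : EuclideanSpace ℝ (Fin 3)) 1,
              ∀ y ∈ ball (0 : EuclideanSpace ℝ (Fin 3)) 1,
                |V x - V y| ≤ A * ‖x - y‖ ^ (1 / 2 : ℝ)) →
            ContDiffOn ℝ 2 u (ball (0 : EuclideanSpace ℝ (Fin 3)) 1) →
            (∀ x ∈ ball (0 : EuclideanSpace ℝ (Fin 3)) 1, m ≤ u x) →
            (∀ x ∈ ball (0 : EuclideanSpace ℝ (Fin 3)) 1, -lapl u x = V x * u x ^ 5) →
            sSup (u '' K) ≤ c := by
  set ℓ := 16 / √a with hℓd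
  have hsa : 0 < √a := Real.sqrt_pos.2 ha
  have hℓ : 0 < ℓ := by positivity
  have haℓ : a * ℓ^2 = 256 := by
    rw [hℓd, div_pow, Real.sq_sqrt ha.le]; field_simp; norm_num
  have hδ : 0 < 256 * ℓ^2 * √(2*ℓ) := by positivity
  refine ⟨m / (256 * ℓ^2 * √(2*ℓ)), by positivity, ?_⟩
  intro K hK hKB
  rcases K.eq_empty_or_nonempty with rfl | hne
  · exact ⟨0, fun _ _ _ _ _ _ _ _ _ _ => by simp⟩
  obtain ⟨p, hpK, hp⟩ := hK.exists_isMaxOn hne continuous_norm.continuousOn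
  have hp1 : ‖p‖ < 1 := by simpa using hKB hpK
  set σ := (1 - ‖p‖)/4 with hσd
  have hσ : 0 < σ := by linarith
  have hσ1 : σ ≤ 1 := by have := norm_nonneg p; linarith
  refine ⟨1 + 16*ℓ/(σ*m) + 6*ℓ/σ, ?_⟩
  intro A hA hAδ V u hV hH hu hlow heq
  refine Real.sSup_le ?_ (by positivity)
  rintro _ ⟨xs, hxs, rfl⟩
  have hxn : ‖xs‖ ≤ ‖p‖ := hp hxs
  have hsm : ∀ x : E3, ‖x‖ < 1 → ContDiffAt ℝ 2 u x := fun x hx =>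
    hu.contDiffAt (isOpen_ball.mem_nhds (by simpa using hx))
  have q1 : 0 < 16*ℓ/(σ*m) := by positivity
  have q2 : 0 < 6*ℓ/σ := by positivity
  refine core_s2 ha hb hm hℓ haℓ hσ hσ1 (by linarith) ?_ ?_ hA ((le_div_iff₀ hδ).1 hAδ)
    (by linarith) (fun x hx => hV x (by simpa using hx)) ?_ hsm
    (fun x hx => hlow x (by simpa using hx)) ?_
  · rw [← div_le_iff₀ (by positivity)]; linarith
  · rw [mul_comm σ, ← div_le_iff₀ hσ]; linarith
  · intro x hx y hy
    rw [Real.sqrt_eq_rpow]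
    exact hH x (by simpa using hx) y (by simpa using hy)
  · intro x hx
    rw [← heq x (by simpa using hx), neg_neg, lapl]
    refine Finset.sum_congr rfl fun i _ => ?_
    have d1 : DifferentiableAt ℝ (fderiv ℝ u) x :=
      ((hsm x hx).fderiv_right (m := 1) (by norm_num)).differentiableAt (by norm_num)
    rw [fderiv_clm_apply d1 (differentiableAt_const _)]
    simp
end

section
/- Let n ≥ 3, b > 0, 0 ≤ ε < 2/(n−2), N = 2n/(n−2), and let B be the open unit ball of ℝⁿ. Let V be continuous on B̄ with 0 ≤ V(x) ≤ b, and let u ∈ C²(B) ∩ C⁰(B̄) satisfy u > 0 in B, u = 0 on ∂B and −∑ᵢ ∂²u/∂xᵢ² = V u^{N−1−ε} in B. If x₀ ∈ B is a point where u attains its maximum over B̄, then [u(x₀)]^{4/(n−2)−ε} · dist(x₀, ∂B) ≥ n/b, where dist(x₀, ∂B) = 1 − |x₀|. -/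
open MeasureTheory Metric Real

/-- A function with a local maximum cannot have positive second derivative. -/
theorem aux_second_deriv {f : ℝ → ℝ} {d : ℝ} (hf : ContinuousAt f 0)
    (hmax : IsLocalMax f 0) (hd : HasDerivAt (deriv f) d 0) : d ≤ 0 := by
  by_contra hcon
  push Not at hcon
  have hmin : IsLocalMin f 0 :=
    isLocalMin_of_deriv_deriv_pos (by rw [hd.deriv]; exact hcon) hmax.deriv_eq_zero hf
  have hconst : f =ᶠ[nhds 0] fun _ => f 0 := by
    filter_upwards [hmax, hmin] with t h1 h2
    exact le_antisymm h1 h2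
  have h1 : deriv f =ᶠ[nhds 0] deriv (fun _ : ℝ => f 0) := hconst.deriv
  have h2 := h1.deriv_eq
  rw [hd.deriv] at h2
  simp at h2
  linarith

/-- Second derivative test in direction `e` for `u + c |x|²`. -/
theorem aux_dir {n : ℕ} (u : EuclideanSpace ℝ (Fin n) → ℝ) (c : ℝ)
    (hu : ContDiffOn ℝ 2 u (ball (0 : EuclideanSpace ℝ (Fin n)) 1))
    (z e : EuclideanSpace ℝ (Fin n)) (hz : z ∈ ball (0 : EuclideanSpace ℝ (Fin n)) 1)
    (he : ‖e‖ = 1)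
    (hmax : ∀ y ∈ ball (0 : EuclideanSpace ℝ (Fin n)) 1,
      u y + c * ‖y‖ ^ 2 ≤ u z + c * ‖z‖ ^ 2) :
    fderiv ℝ (fun y => fderiv ℝ u y e) z e + 2 * c ≤ 0 := by
  have hline : ∀ t : ℝ, HasDerivAt (fun t : ℝ => z + t • e) e t := by
    intro t
    simpa using ((hasDerivAt_id t).smul_const e).const_add z
  have hcont : Continuous (fun t : ℝ => z + t • e) := by fun_prop
  have hnear : ∀ᶠ t : ℝ in nhds 0, z + t • e ∈ ball (0 : EuclideanSpace ℝ (Fin n)) 1 := by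
    apply hcont.continuousAt.eventually_mem
    exact isOpen_ball.mem_nhds (by simpa using hz)
  have hnorm : ∀ t : ℝ, ‖z + t • e‖ ^ 2 = ‖z‖ ^ 2 + 2 * t * inner ℝ z e + t ^ 2 := by
    intro t
    rw [norm_add_sq_real, inner_smul_right, norm_smul, he]
    simp
    ring
  set f : ℝ → ℝ := fun t => u (z + t • e) + c * (‖z‖ ^ 2 + 2 * t * inner ℝ z e + t ^ 2) with hf
  have hquad : ∀ t : ℝ, HasDerivAt
      (fun t : ℝ => c * (‖z‖ ^ 2 + 2 * t * inner ℝ z e + t ^ 2))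
      (c * (2 * inner ℝ z e + 2 * t)) t := by
    intro t
    have h1 : HasDerivAt (fun t : ℝ => 2 * t * inner ℝ z e) (2 * 1 * inner ℝ z e) t :=
      ((hasDerivAt_id t).const_mul 2).mul_const _
    have h2 : HasDerivAt (fun t : ℝ => t ^ 2) (2 * t) t := by
      simpa using hasDerivAt_pow 2 t
    have h3 := ((h1.const_add (‖z‖ ^ 2)).add h2).const_mul c
    exact h3.congr_deriv (by ring)
  have hder : ∀ t : ℝ, z + t • e ∈ ball (0 : EuclideanSpace ℝ (Fin n)) 1 →
      HasDerivAt f (fderiv ℝ u (z + t • e) e + c * (2 * inner ℝ z e + 2 * t)) t := by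
    intro t ht
    have hd : DifferentiableAt ℝ u (z + t • e) :=
      (hu.differentiableOn (by norm_num)).differentiableAt (isOpen_ball.mem_nhds ht)
    exact (hd.hasFDerivAt.comp_hasDerivAt t (hline t)).add (hquad t)
  have hder' : deriv f =ᶠ[nhds 0]
      fun t => fderiv ℝ u (z + t • e) e + c * (2 * inner ℝ z e + 2 * t) := by
    filter_upwards [hnear] with t ht using (hder t ht).deriv
  have hz0 : z + (0 : ℝ) • e ∈ ball (0 : EuclideanSpace ℝ (Fin n)) 1 := by simpa using hz
  have hD2 : DifferentiableAt ℝ (fun y => fderiv ℝ u y e) (z + (0 : ℝ) • e) := by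
    have h1 : DifferentiableOn ℝ (fderiv ℝ u) (ball (0 : EuclideanSpace ℝ (Fin n)) 1) :=
      (hu.fderiv_of_isOpen (m := 1) isOpen_ball (by norm_num)).differentiableOn (by norm_num)
    have h2 : DifferentiableAt ℝ (fderiv ℝ u) (z + (0 : ℝ) • e) :=
      h1.differentiableAt (isOpen_ball.mem_nhds hz0)
    exact h2.clm_apply (differentiableAt_const e)
  have hsec : HasDerivAt (deriv f)
      (fderiv ℝ (fun y => fderiv ℝ u y e) z e + 2 * c) 0 := by
    apply HasDerivAt.congr_of_eventuallyEq _ hder'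
    have h1 := hD2.hasFDerivAt.comp_hasDerivAt (0 : ℝ) (hline 0)
    have h2 : HasDerivAt (fun t : ℝ => c * (2 * inner ℝ z e + 2 * t)) (c * (2 * 1)) 0 :=
      (((hasDerivAt_id (0 : ℝ)).const_mul 2).const_add _).const_mul c
    have h3 := h1.add h2
    refine h3.congr_deriv ?_
    rw [zero_smul, add_zero]
    ring
  apply aux_second_deriv (hder 0 hz0).continuousAt _ hsec
  filter_upwards [hnear] with t ht
  have := hmax _ ht
  rw [hnorm t] at this
  simpa [hf] using this

/-- if `u` is a positive solution of `Δu = V u^{N−1−ε}` on the unit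
ball `B` of `ℝⁿ`, `n ≥ 3`, vanishing on `∂B`, with `0 ≤ V ≤ b`, and `x₀ ∈ B` is a
maximum point of `u` over `B̄`, then `[u(x₀)]^{4/(n−2)−ε} · (1 − |x₀|) ≥ n/b`. -/
theorem max_point_dist_lower_bound
    (n : ℕ) (hn : 3 ≤ n) (b : ℝ) (hb : 0 < b)
    (ε : ℝ) (hε₀ : 0 ≤ ε) (hε₁ : ε < 2 / ((n : ℝ) - 2))
    (V u : EuclideanSpace ℝ (Fin n) → ℝ)
    (hV : ContinuousOn V (closedBall (0 : EuclideanSpace ℝ (Fin n)) 1))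
    (hVb : ∀ x ∈ closedBall (0 : EuclideanSpace ℝ (Fin n)) 1, 0 ≤ V x ∧ V x ≤ b)
    (hu : ContDiffOn ℝ 2 u (ball (0 : EuclideanSpace ℝ (Fin n)) 1))
    (huc : ContinuousOn u (closedBall (0 : EuclideanSpace ℝ (Fin n)) 1))
    (hupos : ∀ x ∈ ball (0 : EuclideanSpace ℝ (Fin n)) 1, 0 < u x)
    (hubd : ∀ x ∈ sphere (0 : EuclideanSpace ℝ (Fin n)) 1, u x = 0)
    (hpde : ∀ x ∈ ball (0 : EuclideanSpace ℝ (Fin n)) 1,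
      -lapl u x = V x * u x ^ (2 * (n : ℝ) / ((n : ℝ) - 2) - 1 - ε))
    (x₀ : EuclideanSpace ℝ (Fin n)) (hx₀ : x₀ ∈ ball (0 : EuclideanSpace ℝ (Fin n)) 1)
    (hmax : ∀ y ∈ closedBall (0 : EuclideanSpace ℝ (Fin n)) 1, u y ≤ u x₀) :
    (n : ℝ) / b ≤ u x₀ ^ (4 / ((n : ℝ) - 2) - ε) * (1 - ‖x₀‖) := by
  have hn3 : (3 : ℝ) ≤ n := by exact_mod_cast hn
  have hn2 : (0 : ℝ) < n - 2 := by linarith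
  have hM : 0 < u x₀ := hupos x₀ hx₀
  set M := u x₀ with hMdef
  set p : ℝ := 2 * (n : ℝ) / ((n : ℝ) - 2) - 1 - ε with hp
  have hpq : p = (4 / ((n : ℝ) - 2) - ε) + 1 := by
    rw [hp]; field_simp; ring
  have hp0 : 0 ≤ p := by
    have : (2 : ℝ) / (n - 2) ≤ 4 / (n - 2) := by gcongr; norm_num
    linarith
  have hx1 : ‖x₀‖ < 1 := by simpa using hx₀
  have key : ∀ δ > 0, M ≤ (b * M ^ p + δ) / (2 * n) * (1 - ‖x₀‖ ^ 2) := by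
    intro δ hδ
    set c := (b * M ^ p + δ) / (2 * n) with hc
    have hgc : ContinuousOn (fun y => u y + c * ‖y‖ ^ 2)
        (closedBall (0 : EuclideanSpace ℝ (Fin n)) 1) :=
      huc.add (by fun_prop)
    obtain ⟨z, hz, hzmax⟩ := (isCompact_closedBall (0 : EuclideanSpace ℝ (Fin n)) 1).exists_isMaxOn
      ⟨x₀, ball_subset_closedBall hx₀⟩ hgc
    have hzm : ∀ y ∈ closedBall (0 : EuclideanSpace ℝ (Fin n)) 1,
        u y + c * ‖y‖ ^ 2 ≤ u z + c * ‖z‖ ^ 2 := fun y hy => hzmax hy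
    by_cases hzb : z ∈ ball (0 : EuclideanSpace ℝ (Fin n)) 1
    · exfalso
      have hdir : ∀ i : Fin n, fderiv ℝ (fun y => fderiv ℝ u y (EuclideanSpace.single i 1)) z
          (EuclideanSpace.single i 1) + 2 * c ≤ 0 := fun i =>
        aux_dir u c hu z _ hzb (by simp) (fun y hy => hzm y (ball_subset_closedBall hy))
      have hsum : lapl u z + n * (2 * c) ≤ 0 := by
        have := Finset.sum_nonpos (fun i (_ : i ∈ Finset.univ) => hdir i)
        rw [Finset.sum_add_distrib] at this
        simpa [lapl] using this
      have hnc : n * (2 * c) = b * M ^ p + δ := by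
        rw [hc]; field_simp
      have h1 := hpde z hzb
      have h2 : V z * u z ^ p ≤ b * M ^ p :=
        mul_le_mul (hVb z hz).2 (Real.rpow_le_rpow (hupos z hzb).le (hmax z hz) hp0)
          (Real.rpow_nonneg (hupos z hzb).le _) hb.le
      linarith
    · have hz1 : ‖z‖ = 1 := by
        simp at hz hzb
        exact le_antisymm hz hzb
      have h0 : u z = 0 := hubd z (by simpa using hz1)
      have := hzm x₀ (ball_subset_closedBall hx₀)
      rw [h0, hz1] at this
      nlinarith
  have key2 : M ≤ (b * M ^ p) / (2 * n) * (1 - ‖x₀‖ ^ 2) := by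
    have hs : 0 ≤ ‖x₀‖ := norm_nonneg _
    have hs2 : 0 ≤ ‖x₀‖ ^ 2 := by positivity
    apply le_of_forall_pos_le_add
    intro δ hδ
    refine (key δ hδ).trans ?_
    have h1 : δ / (2 * n) ≤ δ := div_le_self hδ.le (by linarith)
    have h2 : 0 ≤ δ / (2 * n) := by positivity
    rw [add_div, add_mul]
    nlinarith
  have hMp : M ^ p = M ^ (4 / ((n : ℝ) - 2) - ε) * M := by
    rw [hpq, Real.rpow_add hM, Real.rpow_one]
  set Q := M ^ (4 / ((n : ℝ) - 2) - ε) with hQ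
  have hQ0 : 0 < Q := Real.rpow_pos_of_pos hM _
  rw [hMp] at key2
  have hnpos : (0 : ℝ) < n := by linarith
  have h3 : 2 * n * M ≤ (b * Q * (1 - ‖x₀‖ ^ 2)) * M := by
    have h4 : b * (Q * M) / (2 * n) * (1 - ‖x₀‖ ^ 2)
        = ((b * Q * (1 - ‖x₀‖ ^ 2)) * M) / (2 * n) := by ring
    rw [h4, le_div_iff₀ (by positivity)] at key2
    linarith
  have h5 : 2 * n ≤ b * Q * (1 - ‖x₀‖ ^ 2) := le_of_mul_le_mul_right h3 hM
  have h6 : 1 - ‖x₀‖ ^ 2 ≤ 2 * (1 - ‖x₀‖) := by nlinarith [sq_nonneg (1 - ‖x₀‖)]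
  have h7 : b * Q * (1 - ‖x₀‖ ^ 2) ≤ b * Q * (2 * (1 - ‖x₀‖)) :=
    mul_le_mul_of_nonneg_left h6 (by positivity)
  rw [div_le_iff₀ hb]
  linarith
end

section
/- Let n ≥ 3, b > 0, 0 ≤ ε < 2/(n−2), N = 2n/(n−2), and let B be the open unit ball of ℝⁿ. Let V be continuous on B̄ with 0 ≤ V(x) ≤ b, and let u ∈ C²(B) ∩ C⁰(B̄) satisfy u > 0 in B, u = 0 on ∂B and −∑ᵢ ∂²u/∂xᵢ² = V u^{N−1−ε} in B. Then (sup_{B̄} u)^{4/(n−2)−ε} ≥ n/b; in particular the supremum of any such solution is bounded below by a positive constant depending only on n, b and ε. -/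
open MeasureTheory Metric Real

/-- One-dimensional necessary condition at a local maximum. -/
lemma not_isLocalMax_of_deriv_deriv_pos {h : ℝ → ℝ} {a : ℝ} (h2 : 0 < deriv (deriv h) a)
    (hc : ContinuousAt h a) (hmax : IsLocalMax h a) : False := by
  have h1 : deriv h a = 0 := hmax.deriv_eq_zero
  have hmin : IsLocalMin h a := isLocalMin_of_deriv_deriv_pos h2 h1 hc
  have heq : h =ᶠ[nhds a] fun _ => h a := by
    filter_upwards [hmax, hmin] with t ht1 ht2
    exact le_antisymm ht1 ht2
  have e1 : deriv h =ᶠ[nhds a] deriv (fun _ => h a) := heq.deriv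
  have := e1.deriv_eq
  simp at this
  linarith

/-- At an interior local maximum of `u + c |x|²`, pure second derivatives are `≤ 0`. -/
lemma second_deriv_le {n : ℕ} {u : EuclideanSpace ℝ (Fin n) → ℝ} {x : EuclideanSpace ℝ (Fin n)}
    {c : ℝ} (hu : ContDiffAt ℝ 2 u x)
    (hmax : IsLocalMax (fun y => u y + c * ‖y‖ ^ 2) x) (i : Fin n) :
    fderiv ℝ (fun y => fderiv ℝ u y (EuclideanSpace.single i 1)) x (EuclideanSpace.single i 1)
      + 2 * c ≤ 0 := by
  by_contra! hpos
  set e : EuclideanSpace ℝ (Fin n) := EuclideanSpace.single i 1 with he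
  have hen : ‖e‖ = 1 := by simp [he]
  let γ : ℝ → EuclideanSpace ℝ (Fin n) := fun t => x + t • e
  have hγ : ∀ t, HasDerivAt γ e t := fun t => by
    have := ((hasDerivAt_id t).smul_const e).const_add x
    rw [one_smul] at this
    exact this
  have hγ0 : γ 0 = x := by simp [γ]
  have hγc : Filter.Tendsto γ (nhds 0) (nhds x) := by
    have := (hγ 0).continuousAt.tendsto
    rwa [hγ0] at this
  have hnorm : ∀ t, ‖γ t‖ ^ 2 = ‖x‖ ^ 2 + 2 * t * inner ℝ x e + t ^ 2 := fun t => by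
    simp only [γ]
    rw [norm_add_sq_real, inner_smul_right, norm_smul, hen]
    simp
    ring
  let h : ℝ → ℝ := fun t => u (γ t) + c * ‖γ t‖ ^ 2
  have hdiff : ∀ᶠ y in nhds x, DifferentiableAt ℝ u y := by
    filter_upwards [hu.eventually (by simp)] with y hy
    exact hy.differentiableAt (by simp)
  have hd : ∀ᶠ t in nhds (0 : ℝ),
      HasDerivAt h (fderiv ℝ u (γ t) e + c * (2 * inner ℝ x e + 2 * t)) t := by
    filter_upwards [hγc.eventually hdiff] with t ht
    have a1 : HasDerivAt (fun t => u (γ t)) (fderiv ℝ u (γ t) e) t :=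
      ht.hasFDerivAt.comp_hasDerivAt t (hγ t)
    have a2 : HasDerivAt (fun t => c * ‖γ t‖ ^ 2) (c * (2 * inner ℝ x e + 2 * t)) t := by
      rw [show (fun t => c * ‖γ t‖ ^ 2) =
        fun t => c * (‖x‖ ^ 2 + 2 * t * inner ℝ x e + t ^ 2) from funext fun t => by rw [hnorm t]]
      have b1 : HasDerivAt (fun t : ℝ => t) 1 t := hasDerivAt_id t
      have b2 := ((((b1.const_mul 2).mul_const (inner ℝ x e)).const_add (‖x‖ ^ 2)).add
        (b1.pow 2)).const_mul c
      exact b2.congr_deriv (by push_cast; ring)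
    exact a1.add a2
  have hd' : deriv h =ᶠ[nhds 0] fun t => fderiv ℝ u (γ t) e + c * (2 * inner ℝ x e + 2 * t) := by
    filter_upwards [hd] with t ht using ht.deriv
  have hF : DifferentiableAt ℝ (fun y => fderiv ℝ u y e) (γ 0) := by
    rw [hγ0]
    have : DifferentiableAt ℝ (fderiv ℝ u) x :=
      (hu.fderiv_right (m := 1) (by norm_num)).differentiableAt (by simp)
    exact this.clm_apply (differentiableAt_const e)
  have hdd : HasDerivAt (fun t => fderiv ℝ u (γ t) e + c * (2 * inner ℝ x e + 2 * t))
      (fderiv ℝ (fun y => fderiv ℝ u y e) x e + 2 * c) 0 := by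
    have a1 := hF.hasFDerivAt.comp_hasDerivAt (0 : ℝ) (hγ 0)
    rw [hγ0] at a1
    have b1 : HasDerivAt (fun t : ℝ => t) 1 0 := hasDerivAt_id 0
    have a2 := ((b1.const_mul 2).const_add (2 * inner ℝ x e)).const_mul c
    have := a1.add a2
    exact this.congr_deriv (by rw [mul_one, mul_comm c 2])
  refine not_isLocalMax_of_deriv_deriv_pos (h := h) (a := 0) ?_ hd.self_of_nhds.continuousAt ?_
  · rw [hd'.deriv_eq, hdd.deriv]
    exact hpos
  · have := hγc.eventually hmax
    filter_upwards [this] with t ht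
    simpa only [h, hγ0] using ht

/-- if `u` is a positive solution of `Δu = V u^{N−1−ε}` on the unit
ball `B` of `ℝⁿ`, `n ≥ 3`, vanishing on `∂B`, with `0 ≤ V ≤ b`, then
`(sup_{B̄} u)^{4/(n−2)−ε} ≥ n/b`. -/
theorem sup_rpow_lower_bound
    (n : ℕ) (hn : 3 ≤ n) (b : ℝ) (hb : 0 < b)
    (ε : ℝ) (hε₀ : 0 ≤ ε) (hε₁ : ε < 2 / ((n : ℝ) - 2))
    (V u : EuclideanSpace ℝ (Fin n) → ℝ)
    (hV : ContinuousOn V (closedBall (0 : EuclideanSpace ℝ (Fin n)) 1))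
    (hVb : ∀ x ∈ closedBall (0 : EuclideanSpace ℝ (Fin n)) 1, 0 ≤ V x ∧ V x ≤ b)
    (hu : ContDiffOn ℝ 2 u (ball (0 : EuclideanSpace ℝ (Fin n)) 1))
    (huc : ContinuousOn u (closedBall (0 : EuclideanSpace ℝ (Fin n)) 1))
    (hupos : ∀ x ∈ ball (0 : EuclideanSpace ℝ (Fin n)) 1, 0 < u x)
    (hubd : ∀ x ∈ sphere (0 : EuclideanSpace ℝ (Fin n)) 1, u x = 0)
    (hpde : ∀ x ∈ ball (0 : EuclideanSpace ℝ (Fin n)) 1,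
      -lapl u x = V x * u x ^ (2 * (n : ℝ) / ((n : ℝ) - 2) - 1 - ε)) :
    (n : ℝ) / b ≤ (sSup (u '' closedBall (0 : EuclideanSpace ℝ (Fin n)) 1))
      ^ (4 / ((n : ℝ) - 2) - ε) := by
  have hnr : (3 : ℝ) ≤ n := by exact_mod_cast hn
  have hn2 : (0 : ℝ) < (n : ℝ) - 2 := by linarith
  have hK : IsCompact (closedBall (0 : EuclideanSpace ℝ (Fin n)) 1) := isCompact_closedBall 0 1
  have hne : (closedBall (0 : EuclideanSpace ℝ (Fin n)) 1).Nonempty := ⟨0, by simp⟩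
  obtain ⟨z, hz, hzs⟩ := hK.exists_sSup_image_eq hne huc
  have hbdd : BddAbove (u '' closedBall (0 : EuclideanSpace ℝ (Fin n)) 1) := (hK.image_of_continuousOn huc).bddAbove
  set M := sSup (u '' closedBall (0 : EuclideanSpace ℝ (Fin n)) 1) with hM
  have hle : ∀ x ∈ closedBall (0 : EuclideanSpace ℝ (Fin n)) 1, u x ≤ M := fun x hx =>
    le_csSup hbdd ⟨x, hx, rfl⟩
  have hMpos : 0 < M := lt_of_lt_of_le (hupos 0 (by simp)) (hle 0 (by simp))
  by_contra! hlt
  set q := 4 / ((n : ℝ) - 2) - ε with hq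
  have hpq : 2 * (n : ℝ) / ((n : ℝ) - 2) - 1 - ε = q + 1 := by
    rw [hq]; field_simp; ring
  have hq0 : 0 ≤ q := by
    have : 2 / ((n : ℝ) - 2) ≤ 4 / ((n : ℝ) - 2) := by gcongr; norm_num
    linarith
  have hbM : b * M ^ (q + 1) < n * M := by
    rw [rpow_add_one hMpos.ne', ← mul_assoc]
    have : b * M ^ q < n := by
      rw [lt_div_iff₀ hb] at hlt; linarith
    exact mul_lt_mul_of_pos_right this hMpos
  have hwc : ContinuousOn (fun y : EuclideanSpace ℝ (Fin n) => u y + M / 2 * ‖y‖ ^ 2) (closedBall (0 : EuclideanSpace ℝ (Fin n)) 1) :=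
    huc.add (by fun_prop)
  obtain ⟨x, hx, hxmax⟩ := hK.exists_isMaxOn hne hwc
  have hxM : M ≤ u x + M / 2 * ‖x‖ ^ 2 := by
    have h1 : u z + M / 2 * ‖z‖ ^ 2 ≤ u x + M / 2 * ‖x‖ ^ 2 := hxmax hz
    have : 0 ≤ M / 2 * ‖z‖ ^ 2 := by positivity
    linarith
  have hxb : x ∈ ball (0 : EuclideanSpace ℝ (Fin n)) 1 := by
    have h1 : ‖x‖ ≤ 1 := by simpa using hx
    rcases h1.lt_or_eq with h | h
    · simpa using h
    · have := hubd x (by simpa using h)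
      rw [this, h] at hxM
      linarith
  have hloc : IsLocalMax (fun y : EuclideanSpace ℝ (Fin n) => u y + M / 2 * ‖y‖ ^ 2) x := by
    refine hxmax.isLocalMax ?_
    exact Filter.mem_of_superset (isOpen_ball.mem_nhds hxb) ball_subset_closedBall
  have hux : ContDiffAt ℝ 2 u x := hu.contDiffAt (isOpen_ball.mem_nhds hxb)
  have hlap : lapl u x + n * M ≤ 0 := by
    have := Finset.sum_nonpos (s := Finset.univ) fun i _ => second_deriv_le hux hloc i
    rw [Finset.sum_add_distrib] at this
    simp only [Finset.sum_const, Finset.card_univ, Fintype.card_fin, nsmul_eq_mul] at this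
    have e : (n : ℝ) * (2 * (M / 2)) = n * M := by ring
    rw [e] at this
    exact this
  have h1 := hpde x hxb
  rw [hpq] at h1
  have h2 : V x * u x ^ (q + 1) ≤ b * M ^ (q + 1) := by
    have hu0 := (hupos x hxb).le
    exact mul_le_mul (hVb x hx).2 (rpow_le_rpow hu0 (hle x hx) (by linarith))
      (rpow_nonneg hu0 _) hb.le
  linarith
end

section
/- Let x₀ ∈ ℝⁿ, R > 0, and let u be a positive continuous function on the closed ball B̄(x₀, R). Define s(x) = (R − |x − x₀|)^{1/2} u(x) on B̄(x₀, R), and let a ∈ B̄(x₀, R) be a point where s attains its maximum. Set M = u(a) and l = R − |a − x₀|. Then for every x with |x − a| ≤ l/2 one has u(x) ≤ √2 · M. -/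
open MeasureTheory Metric Real

/-- blow-up point selection. If `u > 0` is continuous on the closed
ball `B̄(x₀, R)`, `s(x) = (R − |x − x₀|)^{1/2} u(x)` attains its maximum over
`B̄(x₀, R)` at `a`, `M = u(a)` and `l = R − |a − x₀|`, then `u(x) ≤ √2 · M`
whenever `|x − a| ≤ l/2`. -/
theorem blowup_point_selection
    {n : ℕ} (x₀ : EuclideanSpace ℝ (Fin n)) (R : ℝ) (hR : 0 < R)
    (u : EuclideanSpace ℝ (Fin n) → ℝ)
    (hu : ContinuousOn u (closedBall x₀ R))
    (hupos : ∀ x ∈ closedBall x₀ R, 0 < u x)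
    (a : EuclideanSpace ℝ (Fin n)) (ha : a ∈ closedBall x₀ R)
    (hmax : ∀ x ∈ closedBall x₀ R,
      Real.sqrt (R - ‖x - x₀‖) * u x ≤ Real.sqrt (R - ‖a - x₀‖) * u a) :
    ∀ x : EuclideanSpace ℝ (Fin n), ‖x - a‖ ≤ (R - ‖a - x₀‖) / 2 →
      u x ≤ Real.sqrt 2 * u a := by
  intro x hx
  have hl : 0 < R - ‖a - x₀‖ := by
    by_contra hcon
    have h0 := hmax x₀ (mem_closedBall_self hR.le)
    rw [Real.sqrt_eq_zero_of_nonpos (not_lt.mp hcon), sub_self, norm_zero, sub_zero,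
      zero_mul] at h0
    have h1 := mul_pos (Real.sqrt_pos.mpr hR) (hupos x₀ (mem_closedBall_self hR.le))
    linarith
  have htri : ‖x - x₀‖ ≤ ‖x - a‖ + ‖a - x₀‖ := norm_sub_le_norm_sub_add_norm_sub x a x₀
  have hxm : x ∈ closedBall x₀ R := by
    rw [mem_closedBall, dist_eq_norm]
    linarith
  have hhalf : 0 < Real.sqrt ((R - ‖a - x₀‖) / 2) := Real.sqrt_pos.mpr (by linarith)
  have hle : Real.sqrt ((R - ‖a - x₀‖) / 2) ≤ Real.sqrt (R - ‖x - x₀‖) :=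
    Real.sqrt_le_sqrt (by linarith)
  have heq : Real.sqrt (R - ‖a - x₀‖) = Real.sqrt ((R - ‖a - x₀‖) / 2) * Real.sqrt 2 := by
    rw [← Real.sqrt_mul (by linarith)]
    congr 1
    ring
  have h1 := hmax x hxm
  have h2 := mul_le_mul_of_nonneg_right hle (hupos x hxm).le
  rw [heq, mul_assoc] at h1
  exact le_of_mul_le_mul_left (h2.trans h1) hhalf
end
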